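/- arXiv:2505.12270 — 2 statements merged into one kernel-verified Lean document; each statement's English description precedes it below -/
import Mathlib

section
/- For every nonnegative integer n, b^2_{4,5}(8n+7) ≡ 0 (mod 40). -/
/-- `coloredRegular k l m n` is the number of `k`-colored partitions of `n` into parts
divisible by neither `l` nor `m`, i.e. the coefficient of `q^n` in
`∏_{j ≥ 1, l ∤ j, m ∤ j} (1 - q^j)^{-k}`.  A `k`-colored partition is a multiset of
(part, color) pairs, where parts are positive integers not divisible by `l` or `m`
and colors range over `{0, …, k-1}`. -/
noncomputable def coloredRegular (k l m n : ℕ) : ℕ :=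
  Nat.card {M : Multiset (ℕ × ℕ) //
    (∀ x ∈ M, ¬ l ∣ x.1 ∧ ¬ m ∣ x.1 ∧ x.2 < k) ∧ (M.map Prod.fst).sum = n}

open PowerSeries Filter Topology
open scoped PowerSeries.WithPiTopology

namespace CR

/-- the window of integers used to compute the `N`-th coefficient -/
noncomputable def win (N : ℕ) : Finset ℤ := Finset.Icc (-((N : ℤ) + 1)) ((N : ℤ) + 1)

/-- the theta series with exponents `p` and signs `e` -/
noncomputable def th (p : ℤ → ℕ) (e : ℤ → ℤ) : ℤ⟦X⟧ :=
  PowerSeries.mk fun N => ∑ m ∈ win N, if p m = N then e m else 0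

/-- growth condition on exponents -/
def Good (p : ℤ → ℕ) : Prop := ∀ m : ℤ, m.natAbs ≤ p m + 1

lemma coeff_th {p : ℤ → ℕ} (hp : Good p) (e : ℤ → ℤ) (N : ℕ) (s : Finset ℤ) (hs : win N ⊆ s) :
    coeff N (th p e) = ∑ m ∈ s, if p m = N then e m else 0 := by
  rw [th, coeff_mk]
  apply Finset.sum_subset hs
  intro m _ hm
  rw [if_neg]
  intro h
  apply hm
  have := hp m
  simp only [win, Finset.mem_Icc]
  omega

lemma win_mono {N M : ℕ} (h : N ≤ M) : win N ⊆ win M := by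
  intro x
  simp only [win, Finset.mem_Icc]
  omega

lemma mem_win {p : ℤ → ℕ} (hp : Good p) {m : ℤ} {N : ℕ} (h : p m ≤ N) : m ∈ win N := by
  have := hp m
  simp only [win, Finset.mem_Icc]
  omega

lemma coeff_th_mul {p p' : ℤ → ℕ} (hp : Good p) (hp' : Good p') (e e' : ℤ → ℤ) (N : ℕ) :
    coeff N (th p e * th p' e') =
      ∑ x ∈ (win N ×ˢ win N).filter (fun x => p x.1 + p' x.2 = N), e x.1 * e' x.2 := by
  rw [coeff_mul, Finset.sum_filter, Finset.sum_product]
  have h1 : ∀ x ∈ Finset.HasAntidiagonal.antidiagonal N, coeff x.1 (th p e) * coeff x.2 (th p' e') =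
      ∑ m ∈ win N, ∑ n ∈ win N, if (p m, p' n) = x then e m * e' n else 0 := by
    rintro ⟨i, j⟩ hx
    rw [Finset.HasAntidiagonal.mem_antidiagonal] at hx
    simp only at hx
    rw [coeff_th hp e i (win N) (win_mono (by omega)), coeff_th hp' e' j (win N) (win_mono (by omega)),
      Finset.sum_mul_sum]
    refine Finset.sum_congr rfl fun m _ => Finset.sum_congr rfl fun n _ => ?_
    simp only [Prod.mk.injEq]
    split_ifs <;> simp_all
  rw [Finset.sum_congr rfl h1, Finset.sum_comm]
  refine Finset.sum_congr rfl fun m _ => ?_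
  rw [Finset.sum_comm]
  refine Finset.sum_congr rfl fun n _ => ?_
  rw [Finset.sum_ite_eq]
  simp

lemma good_mul {p : ℤ → ℕ} (hp : Good p) (k : ℕ) (hk : k ≠ 0) : Good (fun m => k * p m) := by
  intro m
  have := hp m
  have : p m ≤ k * p m := Nat.le_mul_of_pos_left _ (Nat.pos_of_ne_zero hk)
  simp only
  omega

/-- `q ↦ q^k` -/
noncomputable def ex (k : ℕ) [NeZero k] : ℤ⟦X⟧ →ₐ[ℤ] ℤ⟦X⟧ := expand k (NeZero.ne k)

lemma ex_th (k : ℕ) [NeZero k] {p : ℤ → ℕ} (hp : Good p) (e : ℤ → ℤ) :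
    ex k (th p e) = th (fun m => k * p m) e := by
  ext N
  rw [ex, coeff_expand]
  have hk := NeZero.ne k
  split_ifs with h
  · obtain ⟨r, rfl⟩ := h
    rw [Nat.mul_div_cancel_left _ (Nat.pos_of_ne_zero hk),
      coeff_th (good_mul hp k hk) e (k * r) _ subset_rfl,
      coeff_th hp e r (win (k * r)) (win_mono (Nat.le_mul_of_pos_left _ (Nat.pos_of_ne_zero hk)))]
    refine Finset.sum_congr rfl fun m _ => ?_
    simp [hk]
  · rw [th, coeff_mk]
    symm
    apply Finset.sum_eq_zero
    intro m _
    rw [if_neg]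
    rintro rfl
    exact h ⟨_, rfl⟩

lemma ex_ex (a b c : ℕ) [NeZero a] [NeZero b] [NeZero c] (h : a * b = c) (f : ℤ⟦X⟧) :
    ex a (ex b f) = ex c f := by
  subst h
  exact (expand_mul a (NeZero.ne a) b (NeZero.ne b) f).symm

/-- squares -/
def sq (m : ℤ) : ℕ := m.natAbs ^ 2
/-- triangular numbers -/
def tri (m : ℤ) : ℕ := (m * (2 * m - 1)).toNat
/-- sign -/
def sg (m : ℤ) : ℤ := (Int.negOnePow m : ℤ)

lemma sq_cast (m : ℤ) : (sq m : ℤ) = m ^ 2 := by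
  simp [sq]

lemma tri_cast (m : ℤ) : (tri m : ℤ) = m * (2 * m - 1) := by
  rw [tri, Int.toNat_of_nonneg]
  rcases le_or_gt m 0 with h | h
  · nlinarith
  · nlinarith

lemma good_of {p : ℤ → ℕ} (h : ∀ m : ℤ, m ≤ p m + 1 ∧ -m ≤ p m + 1) : Good p := by
  intro m
  have := h m
  omega

lemma good_sq : Good sq := good_of fun m => by
  rw [sq_cast]; constructor <;> nlinarith [sq_nonneg (m-1), sq_nonneg (m+1)]

lemma good_tri : Good tri := good_of fun m => by
  rw [tri_cast]
  constructor
  · nlinarith [sq_nonneg (m-1), sq_nonneg (m+1)]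
  · nlinarith [sq_nonneg (m-1), sq_nonneg (m+1)]

lemma good_pent : Good pentagonal := good_of fun m => by
  have := two_mul_natCast_pentagonal m
  constructor
  · nlinarith [sq_nonneg (m-1), sq_nonneg (m+1)]
  · nlinarith [sq_nonneg (m-1), sq_nonneg (m+1)]

/-- `φ(q)` -/
noncomputable def ph : ℤ⟦X⟧ := th sq (fun _ => 1)
/-- `φ(-q)` -/
noncomputable def mm : ℤ⟦X⟧ := th sq sg
/-- `ψ(q)` -/
noncomputable def ps : ℤ⟦X⟧ := th tri (fun _ => 1)
/-- `f_1` -/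
noncomputable def ff : ℤ⟦X⟧ := th pentagonal sg

lemma ff_eq : ff = pentagonalSeries ℤ := by
  ext N
  by_cases h : N ∈ Set.range pentagonal
  · obtain ⟨k, rfl⟩ := h
    rw [coeff_pentagonalSeries_pentagonal, ff, th, coeff_mk]
    simp only [pentagonal_inj]
    rw [Finset.sum_ite_eq', if_pos (mem_win good_pent le_rfl)]
    simp only [sg]; norm_cast
  · rw [coeff_pentagonalSeries_eq_zero ℤ h, ff, th, coeff_mk]
    apply Finset.sum_eq_zero
    intro m _
    rw [if_neg]
    rintro rfl
    exact h ⟨_, rfl⟩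

/-- finite products -/
noncomputable def pr (k n : ℕ) : ℤ⟦X⟧ := ∏ i ∈ Finset.range n, (1 - X ^ (k * (i + 1)))

lemma ex_X (k : ℕ) [NeZero k] : ex k (X : ℤ⟦X⟧) = X ^ k := by
  simp [ex]

lemma ex_pr (k n : ℕ) [NeZero k] : ex k (pr 1 n) = pr k n := by
  simp [pr, map_prod, ex_X, ← pow_mul]

lemma tendsto_iff_ev {u : ℕ → ℤ⟦X⟧} {f : ℤ⟦X⟧} :
    Tendsto u atTop (𝓝 f) ↔ ∀ d, ∀ᶠ n in atTop, coeff d (u n) = coeff d f := by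
  rw [WithPiTopology.tendsto_iff_coeff_tendsto]
  simp

lemma tendsto_ex (k : ℕ) [NeZero k] {u : ℕ → ℤ⟦X⟧} {f : ℤ⟦X⟧} (h : Tendsto u atTop (𝓝 f)) :
    Tendsto (fun n => ex k (u n)) atTop (𝓝 (ex k f)) := by
  rw [tendsto_iff_ev] at h ⊢
  intro d
  simp only [ex, coeff_expand]
  split_ifs
  · exact h _
  · simp

lemma tendsto_pr1 : Tendsto (fun n => pr 1 n) atTop (𝓝 ff) := by
  have := (WithPiTopology.hasProd_one_sub_X_pow ℤ).tendsto_prod_nat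
  rw [← ff_eq] at this
  simpa [pr] using this

lemma tendsto_pr (k : ℕ) [NeZero k] : Tendsto (fun n => pr k n) atTop (𝓝 (ex k ff)) := by
  have := tendsto_ex k tendsto_pr1
  simpa only [ex_pr] using this

lemma tendsto_of_dvd {u v : ℕ → ℤ⟦X⟧} {f : ℤ⟦X⟧} (h : Tendsto u atTop (𝓝 f))
    (hd : ∀ n, X ^ n ∣ v n - u n) : Tendsto v atTop (𝓝 f) := by
  rw [tendsto_iff_ev] at h ⊢
  intro d
  filter_upwards [h d, eventually_gt_atTop d] with n h1 h2
  have := (X_pow_dvd_iff.1 (hd n)) d h2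
  rw [map_sub] at this
  rw [← h1]
  linarith

lemma tendsto_th {p : ℤ → ℕ} (hp : Good p) (e : ℤ → ℤ) (s : ℕ → Finset ℤ)
    (hs : ∀ n : ℕ, Finset.Icc (-(n : ℤ)) n ⊆ s (n + 1)) :
    Tendsto (fun n => ∑ m ∈ s n, (C (e m) : ℤ⟦X⟧) * X ^ p m) atTop (𝓝 (th p e)) := by
  rw [tendsto_iff_ev]
  intro d
  filter_upwards [eventually_ge_atTop (d + 2)] with n hn
  rw [coeff_th hp e d (s n), map_sum]
  · refine Finset.sum_congr rfl fun m _ => ?_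
    rw [coeff_C_mul, coeff_X_pow]
    simp [eq_comm]
  · obtain ⟨k, rfl⟩ : ∃ k, n = k + 1 := ⟨n - 1, by omega⟩
    refine subset_trans ?_ (hs k)
    intro x
    simp only [win, Finset.mem_Icc]
    omega


section Shanks
variable {R : Type*} [CommRing R] (x : R)

/-- remainder in the first identity of Shanks -/
def shA (n : ℕ) : R := ∏ i ∈ Finset.range n, (1 - x ^ (i + 1)) -
  2 * ∑ s ∈ Finset.range n, (-1) ^ s * (∏ i ∈ Finset.range s, (1 + x ^ (i + 1))) *
    (∏ i ∈ Finset.Ico (s + 1) n, (1 - x ^ (i + 1))) * x ^ ((s + 1) * (n + 1))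

lemma shA_succ (n : ℕ) : shA x (n + 1) = (1 + x ^ (n + 1)) * shA x n -
    2 * (-1) ^ n * (∏ i ∈ Finset.range (n + 1), (1 + x ^ (i + 1))) * x ^ ((n + 1) ^ 2) := by
  have key : ∀ s ∈ Finset.range n,
      (-1) ^ s * (∏ i ∈ Finset.range s, (1 + x ^ (i + 1))) *
        (∏ i ∈ Finset.Ico (s + 1) (n + 1), (1 - x ^ (i + 1))) * x ^ ((s + 1) * (n + 1 + 1)) =
      (1 + x ^ (n + 1)) * ((-1) ^ s * (∏ i ∈ Finset.range s, (1 + x ^ (i + 1))) *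
        (∏ i ∈ Finset.Ico (s + 1) n, (1 - x ^ (i + 1))) * x ^ ((s + 1) * (n + 1))) +
      ((-1) ^ (s + 1) * (∏ i ∈ Finset.range (s + 1), (1 + x ^ (i + 1))) *
        (∏ i ∈ Finset.Ico (s + 1) n, (1 - x ^ (i + 1))) * x ^ ((s + 1 + 1) * (n + 1)) -
      (-1) ^ s * (∏ i ∈ Finset.range s, (1 + x ^ (i + 1))) *
        (∏ i ∈ Finset.Ico s n, (1 - x ^ (i + 1))) * x ^ ((s + 1) * (n + 1))) := by
    intro s hs
    rw [Finset.mem_range] at hs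
    rw [Finset.prod_Ico_succ_top (by omega), Finset.prod_range_succ,
      Finset.prod_eq_prod_Ico_succ_bot hs]
    ring
  rw [shA, shA, Finset.sum_range_succ, Finset.sum_congr rfl key, Finset.sum_add_distrib,
    Finset.sum_range_sub (fun s => (-1) ^ s * (∏ i ∈ Finset.range s, (1 + x ^ (i + 1))) *
        (∏ i ∈ Finset.Ico s n, (1 - x ^ (i + 1))) * x ^ ((s + 1) * (n + 1))), ← Finset.mul_sum]
  rw [Finset.prod_range_succ, Finset.prod_range_succ]
  simp only [Finset.Ico_self, Finset.prod_empty, Finset.range_eq_Ico]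
  ring

lemma shA_eq (n : ℕ) : (∏ i ∈ Finset.range n, (1 + x ^ (i + 1))) *
    (1 + 2 * ∑ s ∈ Finset.range n, (-1) ^ (s + 1) * x ^ ((s + 1) ^ 2)) = shA x n := by
  induction n with
  | zero => simp [shA]
  | succ n ih =>
    rw [shA_succ, ← ih, Finset.sum_range_succ, Finset.prod_range_succ]
    ring

lemma shA_dvd (n : ℕ) : x ^ n ∣ shA x n - ∏ i ∈ Finset.range n, (1 - x ^ (i + 1)) := by
  rw [shA, sub_sub_cancel_left, dvd_neg]
  apply Dvd.dvd.mul_left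
  apply Finset.dvd_sum
  intro s _
  apply Dvd.dvd.mul_left
  apply pow_dvd_pow
  nlinarith

/-- remainder in the second identity of Shanks -/
def shB (n : ℕ) : R := ∑ s ∈ Finset.range n, (∏ i ∈ Finset.range s, (1 - x ^ (2 * i + 1))) *
    (∏ i ∈ Finset.Ico s n, (1 - x ^ (2 * (i + 1)))) * x ^ (s * (2 * n + 1))

lemma shB_succ (n : ℕ) : shB x (n + 1) = (1 - x ^ (2 * n + 1)) * shB x n +
    (∏ i ∈ Finset.range (n + 1), (1 - x ^ (2 * i + 1))) *
      (x ^ (n * (2 * n + 1)) + x ^ ((n + 1) * (2 * n + 1))) := by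
  have key : ∀ s ∈ Finset.range n,
      (∏ i ∈ Finset.range s, (1 - x ^ (2 * i + 1))) *
    (∏ i ∈ Finset.Ico s (n + 1), (1 - x ^ (2 * (i + 1)))) * x ^ (s * (2 * (n + 1) + 1)) =
      (1 - x ^ (2 * n + 1)) * ((∏ i ∈ Finset.range s, (1 - x ^ (2 * i + 1))) *
    (∏ i ∈ Finset.Ico s n, (1 - x ^ (2 * (i + 1)))) * x ^ (s * (2 * n + 1))) +
      ((∏ i ∈ Finset.range (s + 1), (1 - x ^ (2 * i + 1))) *
    (∏ i ∈ Finset.Ico (s + 1) n, (1 - x ^ (2 * (i + 1)))) * (1 - x ^ (2 * (s + 1))) *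
        x ^ ((s + 1) * (2 * n + 1)) -
      (∏ i ∈ Finset.range s, (1 - x ^ (2 * i + 1))) *
    (∏ i ∈ Finset.Ico s n, (1 - x ^ (2 * (i + 1)))) * (1 - x ^ (2 * s)) *
        x ^ (s * (2 * n + 1))) := by
    intro s hs
    rw [Finset.mem_range] at hs
    rw [Finset.prod_Ico_succ_top (by omega), Finset.prod_range_succ,
      Finset.prod_eq_prod_Ico_succ_bot hs]
    ring
  rw [shB, shB, Finset.sum_range_succ, Finset.sum_congr rfl key, Finset.sum_add_distrib,
    Finset.sum_range_sub (fun s => (∏ i ∈ Finset.range s, (1 - x ^ (2 * i + 1))) *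
    (∏ i ∈ Finset.Ico s n, (1 - x ^ (2 * (i + 1)))) * (1 - x ^ (2 * s)) *
        x ^ (s * (2 * n + 1))), ← Finset.mul_sum]
  rw [Finset.prod_range_succ, Finset.prod_Ico_succ_top (le_refl n)]
  simp only [Finset.Ico_self, Finset.prod_empty, Finset.range_zero]
  ring

lemma shB_eq (n : ℕ) : (∏ i ∈ Finset.range n, (1 - x ^ (2 * i + 1))) *
    (∑ s ∈ Finset.range n, (x ^ (s * (2 * s + 1)) + x ^ ((s + 1) * (2 * s + 1)))) = shB x n := by
  induction n with
  | zero => simp [shB]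
  | succ n ih =>
    rw [shB_succ, ← ih, Finset.sum_range_succ, Finset.prod_range_succ]
    ring

lemma shB_dvd (n : ℕ) : x ^ n ∣ shB x n - ∏ i ∈ Finset.range n, (1 - x ^ (2 * (i + 1))) := by
  cases n with
  | zero => simp
  | succ n =>
    rw [shB, Finset.sum_range_succ']
    simp only [Finset.prod_range_zero, one_mul, zero_mul, pow_zero, mul_one,
      ← Finset.range_eq_Ico, add_sub_cancel_right]
    apply Finset.dvd_sum
    intro s _
    apply Dvd.dvd.mul_left
    apply pow_dvd_pow
    nlinarith

lemma prod_AB (n : ℕ) : (∏ i ∈ Finset.range n, (1 + x ^ (i + 1))) *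
    (∏ i ∈ Finset.range n, (1 - x ^ (1 * (i + 1)))) =
    ∏ i ∈ Finset.range n, (1 - x ^ (2 * (i + 1))) := by
  rw [← Finset.prod_mul_distrib]
  refine Finset.prod_congr rfl fun i _ => ?_
  ring

lemma prod_DE (n : ℕ) : (∏ i ∈ Finset.range n, (1 - x ^ (2 * i + 1))) *
    (∏ i ∈ Finset.range n, (1 - x ^ (2 * (i + 1)))) =
    ∏ i ∈ Finset.range (2 * n), (1 - x ^ (1 * (i + 1))) := by
  induction n with
  | zero => simp
  | succ n ih =>
    rw [show 2 * (n + 1) = 2 * n + 1 + 1 by ring]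
    rw [Finset.prod_range_succ, Finset.prod_range_succ, Finset.prod_range_succ,
      Finset.prod_range_succ, ← ih]
    ring

end Shanks

lemma sum_Icc_sym {M : Type*} [AddCommMonoid M] (g : ℤ → M) (n : ℕ) :
    ∑ m ∈ Finset.Icc (-(n : ℤ)) n, g m =
      g 0 + ∑ s ∈ Finset.range n, (g ((s : ℤ) + 1) + g (-((s : ℤ) + 1))) := by
  induction n with
  | zero => simp
  | succ n ih =>
    rw [Finset.sum_range_succ, ← add_assoc, ← ih]
    have : Finset.Icc (-((n + 1 : ℕ) : ℤ)) ((n + 1 : ℕ) : ℤ) =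
        insert ((n : ℤ) + 1) (insert (-((n : ℤ) + 1)) (Finset.Icc (-(n : ℤ)) n)) := by
      ext y
      simp only [Finset.mem_Icc, Finset.mem_insert]
      omega
    rw [this, Finset.sum_insert, Finset.sum_insert]
    · abel
    · simp
    · simp only [Finset.mem_Icc, Finset.mem_insert]
      omega

lemma sum_Ioc_sym {M : Type*} [AddCommMonoid M] (g : ℤ → M) (n : ℕ) :
    ∑ m ∈ Finset.Ioc (-(n : ℤ)) n, g m =
      ∑ s ∈ Finset.range n, (g (-(s : ℤ)) + g ((s : ℤ) + 1)) := by
  induction n with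
  | zero => simp
  | succ n ih =>
    rw [Finset.sum_range_succ, ← ih]
    have : Finset.Ioc (-((n + 1 : ℕ) : ℤ)) ((n + 1 : ℕ) : ℤ) =
        insert ((n : ℤ) + 1) (insert (-(n : ℤ)) (Finset.Ioc (-(n : ℤ)) n)) := by
      ext y
      simp only [Finset.mem_Ioc, Finset.mem_insert]
      omega
    rw [this, Finset.sum_insert, Finset.sum_insert]
    · abel
    · simp
    · simp only [Finset.mem_Ioc, Finset.mem_insert]
      omega

lemma sg_nat (s : ℕ) : sg ((s : ℤ) + 1) = (-1) ^ (s + 1) := by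
  have : ((s : ℤ) + 1) = ((s + 1 : ℕ) : ℤ) := by push_cast; rfl
  rw [sg, this, Int.negOnePow_def, zpow_natCast]
  simp

lemma sg_neg (m : ℤ) : sg (-m) = sg m := by simp [sg, Int.negOnePow_neg]

lemma tendsto_mm : Tendsto (fun n : ℕ => (1 : ℤ⟦X⟧) +
    2 * ∑ s ∈ Finset.range n, (-1) ^ (s + 1) * X ^ ((s + 1) ^ 2)) atTop (𝓝 mm) := by
  have := tendsto_th good_sq sg (fun n => Finset.Icc (-(n : ℤ)) n) (by
    intro n x; simp only [Finset.mem_Icc]; push_cast; omega)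
  change Tendsto _ _ (𝓝 (th sq sg))
  convert this using 2 with n
  rw [sum_Icc_sym, Finset.mul_sum]
  congr 1
  · simp [sg, sq]
  · refine Finset.sum_congr rfl fun s _ => ?_
    have h : sq (-((s : ℤ) + 1)) = sq ((s : ℤ) + 1) := by simp only [sq, Int.natAbs_neg]
    have h2 : sq ((s : ℤ) + 1) = (s + 1) ^ 2 := by
      zify; rw [sq_cast]
    rw [sg_neg, sg_nat, h, h2]
    simp
    ring

lemma tendsto_ps : Tendsto (fun n : ℕ => ∑ s ∈ Finset.range n,
    ((X : ℤ⟦X⟧) ^ (s * (2 * s + 1)) + X ^ ((s + 1) * (2 * s + 1)))) atTop (𝓝 ps) := by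
  have := tendsto_th good_tri (fun _ => 1) (fun n => Finset.Ioc (-(n : ℤ)) n) (by
    intro n x; simp only [Finset.mem_Icc, Finset.mem_Ioc]; push_cast; omega)
  change Tendsto _ _ (𝓝 (th tri fun _ => 1))
  convert this using 2 with n
  rw [sum_Ioc_sym]
  refine Finset.sum_congr rfl fun s _ => ?_
  have h : tri (-(s : ℤ)) = s * (2 * s + 1) := by
    zify; rw [tri_cast]; ring
  have h2 : tri ((s : ℤ) + 1) = (s + 1) * (2 * s + 1) := by
    zify; rw [tri_cast]; ring
  rw [h, h2]
  simp

/-- `φ(-q) f_2 = f_1^2` -/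
lemma R1 : mm * ex 2 ff = ff ^ 2 := by
  have h1 := tendsto_mm.mul (tendsto_pr 2)
  have h2 := tendsto_pr1.mul tendsto_pr1
  have h3 := tendsto_of_dvd h2 (v := fun n => ((1 : ℤ⟦X⟧) +
    2 * ∑ s ∈ Finset.range n, (-1) ^ (s + 1) * X ^ ((s + 1) ^ 2)) * pr 2 n) (by
      intro n
      have := shA_dvd (X : ℤ⟦X⟧) n
      rw [← shA_eq] at this
      have h := this.mul_right (pr 1 n)
      convert h using 1
      have hh := prod_AB (X : ℤ⟦X⟧) n
      simp only [pr] at *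
      rw [← hh]
      simp only [one_mul]
      ring)
  rw [pow_two]
  exact tendsto_nhds_unique h1 h3

/-- `ψ(q) f_1 = f_2^2` -/
lemma R2 : ps * ff = ex 2 ff ^ 2 := by
  have h1 := tendsto_ps.mul (tendsto_pr1.comp (tendsto_id.const_mul_atTop' (show 0 < 2 by norm_num)))
  have h2 := (tendsto_pr 2).mul (tendsto_pr 2)
  have h3 := tendsto_of_dvd h2 (v := fun n => (∑ s ∈ Finset.range n,
    ((X : ℤ⟦X⟧) ^ (s * (2 * s + 1)) + X ^ ((s + 1) * (2 * s + 1)))) * pr 1 (2 * n)) (by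
      intro n
      have := shB_dvd (X : ℤ⟦X⟧) n
      rw [← shB_eq] at this
      have h := this.mul_right (pr 2 n)
      convert h using 1
      have hh := prod_DE (X : ℤ⟦X⟧) n
      simp only [pr] at *
      rw [← hh]
      ring)
  rw [pow_two]
  exact tendsto_nhds_unique h1 h3


/-- `q ↦ -q` -/
noncomputable def ng : ℤ⟦X⟧ →+* ℤ⟦X⟧ := evalNegHom

lemma coeff_ng (f : ℤ⟦X⟧) (d : ℕ) : coeff d (ng f) = (-1) ^ d * coeff d f := by
  simp [ng, evalNegHom, coeff_rescale]

lemma ng_X : ng (X : ℤ⟦X⟧) = -X := evalNegHom_X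

lemma ng_ng (f : ℤ⟦X⟧) : ng (ng f) = f := by
  ext d
  rw [coeff_ng, coeff_ng, ← mul_assoc, ← mul_pow]
  simp

lemma ng_ex (k : ℕ) [NeZero k] (hk : Even k) (f : ℤ⟦X⟧) : ng (ex k f) = ex k f := by
  ext d
  rw [coeff_ng, ex, coeff_expand]
  split_ifs with h
  · rw [Even.neg_one_pow (hk.trans_dvd h), one_mul]
  · simp

lemma tendsto_ng {u : ℕ → ℤ⟦X⟧} {f : ℤ⟦X⟧} (h : Tendsto u atTop (𝓝 f)) :
    Tendsto (fun n => ng (u n)) atTop (𝓝 (ng f)) := by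
  rw [tendsto_iff_ev] at h ⊢
  intro d
  filter_upwards [h d] with n hn
  rw [coeff_ng, coeff_ng, hn]

lemma ng_pr (n : ℕ) : ng (pr 1 (2 * n)) * pr 1 (2 * n) * pr 4 n = pr 2 (2 * n) * pr 2 n ^ 2 := by
  simp only [pr]
  induction n with
  | zero => simp
  | succ n ih =>
    rw [show 2 * (n + 1) = 2 * n + 1 + 1 by ring]
    simp only [Finset.prod_range_succ, map_mul] at ih ⊢
    have e1 : ng (1 - X ^ (1 * (2 * n + 1))) = 1 + X ^ (2 * n + 1) := by
      rw [map_sub, map_pow, ng_X, map_one, one_mul, Odd.neg_pow ⟨n, rfl⟩, sub_neg_eq_add]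
    have e2 : ng (1 - X ^ (1 * (2 * n + 1 + 1))) = 1 - X ^ (2 * n + 2) := by
      rw [map_sub, map_pow, ng_X, map_one, one_mul, Even.neg_pow ⟨n + 1, by ring⟩]
    rw [e1, e2]
    linear_combination (1 + X ^ (2 * n + 1)) * (1 - X ^ (2 * n + 2)) *
      ((1 - X ^ (1 * (2 * n + 1))) * (1 - X ^ (1 * (2 * n + 1 + 1)))) *
        (1 - X ^ (4 * (n + 1))) * ih

lemma ng_ff : ng ff * ff * ex 4 ff = ex 2 ff ^ 3 := by
  have h2 : Tendsto (fun n : ℕ => 2 * n) atTop atTop :=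
    tendsto_id.const_mul_atTop' (show 0 < 2 by norm_num)
  have h := ((tendsto_ng tendsto_pr1).comp h2).mul (tendsto_pr1.comp h2) |>.mul (tendsto_pr 4)
  have h' := ((tendsto_pr 2).comp h2).mul ((tendsto_pr 2).pow 2)
  have e : ex 2 ff ^ 3 = ex 2 ff * ex 2 ff ^ 2 := by ring
  rw [e]
  refine tendsto_nhds_unique h (h'.congr fun n => ?_)
  exact (ng_pr n).symm

lemma sg_sq (m : ℤ) : (-1) ^ (sq m) = sg m := by
  rcases Int.even_or_odd m with h | h
  · have : Even (sq m) := by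
      rw [sq]; exact (Int.natAbs_even.2 h).pow_of_ne_zero two_ne_zero
    rw [this.neg_one_pow, sg, Int.negOnePow_even m h]; rfl
  · have : Odd (sq m) := by
      rw [sq]; exact (Int.natAbs_odd.2 h).pow
    rw [this.neg_one_pow, sg, Int.negOnePow_odd m h]; rfl

lemma sg_mul_self (m : ℤ) : sg m * sg m = 1 := by
  rcases Int.even_or_odd m with h | h
  · rw [sg, Int.negOnePow_even m h]; rfl
  · rw [sg, Int.negOnePow_odd m h]; rfl

lemma ng_mm : ng mm = ph := by
  ext d
  rw [coeff_ng, mm, ph, th, th, coeff_mk, coeff_mk, Finset.mul_sum]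
  refine Finset.sum_congr rfl fun m _ => ?_
  split_ifs with h
  · rw [← h, sg_sq, sg_mul_self]
  · simp

lemma ng_ph : ng ph = mm := by rw [← ng_mm, ng_ng]

lemma coeff0_th {p : ℤ → ℕ} {e : ℤ → ℤ} (h0 : p 0 = 0) (h1 : p 1 ≠ 0) (h2 : p (-1) ≠ 0)
    (he : e 0 = 1) : constantCoeff (th p e) = 1 := by
  rw [← coeff_zero_eq_constantCoeff_apply, th, coeff_mk]
  have : win 0 = {-1, 0, 1} := by
    ext x; simp only [win, Finset.mem_Icc, Finset.mem_insert, Finset.mem_singleton]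
    push_cast; omega
  rw [this]
  simp [h0, h1, h2, he]

lemma cc_ff : constantCoeff ff = 1 := coeff0_th (by decide) (by decide) (by decide) (by simp [sg])
lemma cc_mm : constantCoeff mm = 1 := coeff0_th (by decide) (by decide) (by decide) (by simp [sg])
lemma cc_ph : constantCoeff ph = 1 := coeff0_th (by decide) (by decide) (by decide) rfl
lemma cc_ps : constantCoeff ps = 1 := coeff0_th (by decide) (by decide) (by decide) rfl

lemma cc_ex (k : ℕ) [NeZero k] {f : ℤ⟦X⟧} (h : constantCoeff f = 1) : constantCoeff (ex k f) = 1 := by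
  rw [ex, constantCoeff_expand, h]

lemma ne0 {f : ℤ⟦X⟧} (h : constantCoeff f = 1) : f ≠ 0 := by
  rintro rfl
  simp at h

lemma R3 : ph * mm = ex 2 mm ^ 2 := by
  have a := R1
  have b := congrArg ng R1
  rw [map_mul, map_pow, ng_mm, ng_ex 2 (by decide)] at b
  have c := ng_ff
  have d := congrArg (ex 2) R1
  rw [map_mul, map_pow, ex_ex 2 2 4 rfl] at d
  have n2 := ne0 (cc_ex 2 cc_ff)
  have n4 := ne0 (cc_ex 4 cc_ff)
  have : ex 2 ff ^ 2 * ex 4 ff ^ 2 ≠ 0 := mul_ne_zero (pow_ne_zero _ n2) (pow_ne_zero _ n4)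
  apply mul_right_cancel₀ this
  have c2 : (ng ff * ff * ex 4 ff) ^ 2 = (ex 2 ff ^ 3) ^ 2 := by rw [c]
  have d2 : (ex 2 mm * ex 4 ff) ^ 2 = (ex 2 ff ^ 2) ^ 2 := by rw [d]
  linear_combination c2 - ex 2 ff ^ 2 * d2 + ph * ex 2 ff * ex 4 ff ^ 2 * a
    + ff ^ 2 * ex 4 ff ^ 2 * b

lemma R4 : ph * ex 2 ps = ps ^ 2 := by
  have a := R2
  have b := congrArg ng R1
  rw [map_mul, map_pow, ng_mm, ng_ex 2 (by decide)] at b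
  have c := ng_ff
  have d := congrArg (ex 2) R2
  rw [map_mul, map_pow, ex_ex 2 2 4 rfl] at d
  have n2 := ne0 (cc_ex 2 cc_ff)
  have n4 := ne0 cc_ff
  have : ex 2 ff ^ 2 * ff ^ 2 ≠ 0 := mul_ne_zero (pow_ne_zero _ n2) (pow_ne_zero _ n4)
  apply mul_right_cancel₀ this
  have c2 : (ng ff * ff * ex 4 ff) ^ 2 = (ex 2 ff ^ 3) ^ 2 := by rw [c]
  have d2 : (ps * ff) ^ 2 = (ex 2 ff ^ 2) ^ 2 := by rw [a]
  linear_combination c2 - ex 2 ff ^ 2 * d2 + ph * ex 2 ff * ff ^ 2 * d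
    + ff ^ 2 * ex 4 ff ^ 2 * b

lemma R5 : ph = ex 4 ph + 2 * (X * ex 8 ps) := by
  have hps : X * ex 8 ps = th (fun m => 8 * tri m + 1) (fun _ => 1) := by
    rw [ps, ex_th 8 good_tri]
    have g : Good (fun m => 8 * tri m + 1) := fun m => by
      have := good_tri m
      simp only; omega
    ext d
    cases d with
    | zero => rw [coeff_zero_X_mul, th, coeff_mk, Finset.sum_eq_zero]; intro m _; simp
    | succ d =>
      rw [coeff_succ_X_mul, coeff_th (good_mul good_tri 8 (by norm_num)) _ d (win (d + 1))
        (win_mono (by omega)), coeff_th g _ _ _ subset_rfl]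
      simp
  rw [hps, ph, ex_th 4 good_sq]
  ext d
  have g : Good (fun m => 8 * tri m + 1) := fun m => by
      have := good_tri m
      simp only; omega
  have hd1 : Disjoint ((win d).image (fun k : ℤ => 4 * k - 1)) ((win d).image (fun k : ℤ => 1 - 4 * k)) := by
    rw [Finset.disjoint_left]
    simp only [Finset.mem_image]
    rintro a ⟨x, _, rfl⟩ ⟨y, _, h⟩
    omega
  have hd2 : Disjoint ((win d).image (fun k : ℤ => 2 * k)) ((win d).image (fun k : ℤ => 4 * k - 1) ∪
      (win d).image (fun k : ℤ => 1 - 4 * k)) := by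
    rw [Finset.disjoint_left]
    simp only [Finset.mem_image, Finset.mem_union]
    rintro a ⟨x, _, rfl⟩ (⟨y, _, h⟩ | ⟨y, _, h⟩) <;> omega
  have hsub : win d ⊆ (win d).image (fun k : ℤ => 2 * k) ∪ ((win d).image (fun k : ℤ => 4 * k - 1) ∪
      (win d).image (fun k : ℤ => 1 - 4 * k)) := by
    intro x
    simp only [Finset.mem_image, Finset.mem_union, win, Finset.mem_Icc]
    intro hx
    obtain ⟨y, h | h | h⟩ : ∃ y, x = 2 * y ∨ x = 4 * y - 1 ∨ x = 1 - 4 * y := by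
      have : x % 2 = 0 ∨ x % 4 = 3 ∨ x % 4 = 1 := by omega
      rcases this with h | h | h
      · exact ⟨x / 2, by omega⟩
      · exact ⟨(x + 1) / 4, by omega⟩
      · exact ⟨(1 - x) / 4, by omega⟩
    · exact Or.inl ⟨y, by omega, h.symm⟩
    · exact Or.inr (Or.inl ⟨y, by omega, h.symm⟩)
    · exact Or.inr (Or.inr ⟨y, by omega, h.symm⟩)
  have s1 : ∀ k : ℤ, sq (2 * k) = 4 * sq k := fun k => by
    zify; rw [sq_cast, sq_cast]; ring
  have s2 : ∀ k : ℤ, sq (4 * k - 1) = 8 * tri k + 1 := fun k => by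
    zify; rw [sq_cast, tri_cast]; ring
  have s3 : ∀ k : ℤ, sq (1 - 4 * k) = 8 * tri k + 1 := fun k => by
    zify; rw [sq_cast, tri_cast]; ring
  rw [coeff_th good_sq _ d _ hsub, Finset.sum_union hd2, Finset.sum_union hd1,
    Finset.sum_image (fun x _ y _ h => by simpa using h),
    Finset.sum_image (fun x _ y _ h => by simpa using h),
    Finset.sum_image (fun x _ y _ h => by simpa using h),
    map_add, two_mul, map_add, coeff_th g _ _ _ subset_rfl,
    coeff_th (good_mul good_sq 4 (by norm_num)) _ _ _ subset_rfl]
  simp only [s1, s2, s3]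

lemma R5' : mm = ex 4 ph - 2 * (X * ex 8 ps) := by
  have := congrArg ng R5
  rw [ng_ph, map_add, map_mul, map_mul, ng_X, ng_ex 4 (by decide), ng_ex 8 (by decide), map_ofNat] at this
  rw [this]; ring

lemma R7 : ∃ t, mm = 1 + 2 * t := by
  have h : ∀ d, (2 : ℤ) ∣ coeff d (mm - 1) := by
    intro d
    obtain ⟨n, hn⟩ := ((tendsto_iff_ev.1 tendsto_mm) d).exists
    rw [map_sub, ← hn, map_add, add_sub_cancel_left]
    rw [show (2 : ℤ⟦X⟧) = C 2 from rfl, coeff_C_mul]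
    exact dvd_mul_right _ _
  choose t ht using h
  refine ⟨mk t, ?_⟩
  rw [← sub_eq_iff_eq_add']
  ext d
  rw [ht, show (2 : ℤ⟦X⟧) = C 2 from rfl, coeff_C_mul, coeff_mk]


/-- lattice points on `u^2 + 5 v^2 = 4 N + 1` -/
noncomputable def Q (N : ℕ) : Finset (ℤ × ℤ) :=
  (Finset.Icc (-(4 * (N : ℤ) + 1)) (4 * N + 1) ×ˢ Finset.Icc (-(4 * (N : ℤ) + 1)) (4 * N + 1)).filter
    (fun x => x.1 ^ 2 + 5 * x.2 ^ 2 = 4 * N + 1)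

lemma mem_Q {N : ℕ} {x : ℤ × ℤ} : x ∈ Q N ↔ x.1 ^ 2 + 5 * x.2 ^ 2 = 4 * N + 1 := by
  simp only [Q, Finset.mem_filter, Finset.mem_product, Finset.mem_Icc, and_iff_right_iff_imp]
  intro h
  refine ⟨⟨?_, ?_⟩, ?_, ?_⟩ <;>
    nlinarith [sq_nonneg (x.1 - 1), sq_nonneg (x.1 + 1), sq_nonneg (x.2 - 1), sq_nonneg (x.2 + 1),
      sq_nonneg x.1, sq_nonneg x.2]

lemma Q_par {N : ℕ} {x : ℤ × ℤ} (h : x ∈ Q N) : (x.1 + x.2) % 2 = 1 := by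
  rw [mem_Q] at h
  have h2 : (x.1 ^ 2 + 5 * x.2 ^ 2) % 2 = 1 := by omega
  rcases Int.emod_two_eq_zero_or_one x.1 with a | a <;>
    rcases Int.emod_two_eq_zero_or_one x.2 with b | b <;>
    simp [pow_two, Int.add_emod, Int.mul_emod, a, b] at h2 ⊢

lemma half (P : ℤ × ℤ → Prop) [DecidablePred P] (S : Finset (ℤ × ℤ))
    (hS : ∀ x ∈ S, -x ∈ S) (hP : ∀ x ∈ S, P (-x) ↔ ¬ P x) (g : ℤ × ℤ → ℤ)
    (hg : ∀ x, g (-x) = g x) : ∑ x ∈ S, g x = 2 * ∑ x ∈ S.filter P, g x := by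
  rw [← Finset.sum_filter_add_sum_filter_not S P, two_mul]
  congr 1
  refine Finset.sum_bij' (fun x _ => -x) (fun x _ => -x) ?_ ?_ ?_ ?_ ?_
  · intro x hx
    rw [Finset.mem_filter] at hx ⊢
    exact ⟨hS x hx.1, (hP x hx.1).2 hx.2⟩
  · intro x hx
    rw [Finset.mem_filter] at hx ⊢
    refine ⟨hS x hx.1, fun h => ?_⟩
    exact (hP x hx.1).1 h hx.2
  · intro x _; simp
  · intro x _; simp
  · intro x _; rw [hg]

lemma sg_add (a b : ℤ) : sg (a + b) = sg a * sg b := by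
  simp [sg, Int.negOnePow_add]

lemma sg_even {a : ℤ} (h : a % 2 = 0) : sg a = 1 := by
  rw [sg, Int.negOnePow_even a (Int.even_iff.2 h)]; rfl

lemma sg_odd {a : ℤ} (h : a % 2 = 1) : sg a = -1 := by
  rw [sg, Int.negOnePow_odd a (Int.odd_iff.2 h)]; rfl

lemma Q_neg {N : ℕ} {x : ℤ × ℤ} (h : x ∈ Q N) : -x ∈ Q N := by
  rw [mem_Q] at h ⊢
  simpa using h

lemma inv_zero (N : ℕ) : ∑ x ∈ (Q N).filter (fun x => (x.1 + x.2) % 3 = 0), sg x.2 = 0 := by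
  have aux : ∀ x ∈ (Q N).filter (fun x => (x.1 + x.2) % 3 = 0), ∃ a b : ℤ,
      2 * x.1 + 5 * x.2 = 3 * a ∧ x.1 - 2 * x.2 = 3 * b := by
    intro x hx
    rw [Finset.mem_filter] at hx
    exact ⟨(2 * x.1 + 5 * x.2) / 3, (x.1 - 2 * x.2) / 3, by omega, by omega⟩
  refine Finset.sum_involution
    (fun x _ => ((2 * x.1 + 5 * x.2) / 3, (x.1 - 2 * x.2) / 3)) ?_ ?_ ?_ ?_
  · intro x hx
    obtain ⟨a, b, h1, h2⟩ := aux x hx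
    rw [Finset.mem_filter] at hx
    have hp := Q_par hx.1
    have hb : (x.1 - 2 * x.2) / 3 = b := by omega
    simp only [hb]
    rcases Int.emod_two_eq_zero_or_one x.2 with c | c
    · rw [sg_even c, sg_odd (by omega)]; rfl
    · rw [sg_odd c, sg_even (by omega)]; rfl
  · intro x hx _ he
    obtain ⟨a, b, h1, h2⟩ := aux x hx
    rw [Finset.mem_filter] at hx
    have hp := Q_par hx.1
    have := congrArg Prod.snd he
    simp only at this
    omega
  · intro x hx
    obtain ⟨a, b, h1, h2⟩ := aux x hx
    rw [Finset.mem_filter, mem_Q] at hx ⊢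
    have ha : (2 * x.1 + 5 * x.2) / 3 = a := by omega
    have hb : (x.1 - 2 * x.2) / 3 = b := by omega
    simp only [ha, hb]
    refine ⟨?_, by omega⟩
    have h9 : 9 * (a ^ 2 + 5 * b ^ 2) = 9 * (4 * (N : ℤ) + 1) := by
      linear_combination 9 * hx.1 - (2 * x.1 + 5 * x.2 + 3 * a) * h1 -
        5 * (x.1 - 2 * x.2 + 3 * b) * h2
    linarith
  · intro x hx
    obtain ⟨a, b, h1, h2⟩ := aux x hx
    have ha : (2 * x.1 + 5 * x.2) / 3 = a := by omega
    have hb : (x.1 - 2 * x.2) / 3 = b := by omega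
    simp only [ha, hb]
    ext
    · simp only; omega
    · simp only; omega

lemma sumQ_pent (N : ℕ) : ∑ x ∈ Q N, sg x.2 = 2 * coeff N (ff * ex 5 ff) := by
  rw [← Finset.sum_filter_add_sum_filter_not (Q N) (fun x => (x.1 + x.2) % 3 = 0), inv_zero, zero_add,
    half (fun x => (x.1 + x.2) % 3 = 2) ((Q N).filter (fun x => ¬ (x.1 + x.2) % 3 = 0))]
  rotate_left
  · intro x hx
    rw [Finset.mem_filter] at hx ⊢
    refine ⟨Q_neg hx.1, ?_⟩
    simp only [Prod.fst_neg, Prod.snd_neg]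
    omega
  · intro x hx
    rw [Finset.mem_filter] at hx
    simp only [Prod.fst_neg, Prod.snd_neg]
    omega
  · intro x; simp [sg_neg]
  congr 1
  have gp5 := good_mul good_pent 5 (by norm_num)
  rw [ff, ex_th 5 good_pent, coeff_th_mul good_pent gp5]
  symm
  refine Finset.sum_bij' (fun x _ => (5 * x.2 + x.1 - 1, x.2 - x.1))
    (fun x _ => ((x.1 + x.2 + 1) / 6 - x.2, (x.1 + x.2 + 1) / 6)) ?_ ?_ ?_ ?_ ?_
  · rintro ⟨m, n⟩ hx
    rw [Finset.mem_filter] at hx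
    simp only [Finset.mem_filter, mem_Q]
    have h := hx.2
    have h1 := two_mul_natCast_pentagonal m
    have h2 := two_mul_natCast_pentagonal n
    simp only at h
    zify at h
    refine ⟨⟨?_, by omega⟩, by omega⟩
    rw [← h]
    linear_combination (-2) * h1 - 10 * h2
  · rintro ⟨u, v⟩ hx
    simp only [Finset.mem_filter] at hx
    obtain ⟨⟨hQ, h0⟩, h3⟩ := hx
    have hp := Q_par hQ
    simp only at hp
    rw [mem_Q] at hQ
    simp only at hQ
    obtain ⟨n, hn⟩ : ∃ n, (u + v + 1) / 6 = n := ⟨_, rfl⟩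
    have hu : u = 6 * n - 1 - v := by omega
    simp only [hn]
    have h1 := two_mul_natCast_pentagonal (n - v)
    have h2 := two_mul_natCast_pentagonal n
    have key : pentagonal (n - v) + 5 * pentagonal n = N := by
      zify
      subst hu
      nlinarith
    simp only [Finset.mem_filter, Finset.mem_product]
    exact ⟨⟨mem_win good_pent (by omega), mem_win good_pent (by omega)⟩, key⟩
  · rintro ⟨m, n⟩ _
    ext <;> simp only <;> omega
  · rintro ⟨u, v⟩ hx
    simp only [Finset.mem_filter] at hx
    have hp := Q_par hx.1.1
    simp only at hp
    ext <;> simp only <;> omega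
  · rintro ⟨m, n⟩ _
    simp only
    rw [sub_eq_add_neg, sg_add, sg_neg, mul_comm]

lemma sumQ_even (N : ℕ) : ∑ x ∈ (Q N).filter (fun x => x.2 % 2 = 0), sg x.2 =
    2 * coeff N (ex 5 ph * ex 2 ps) := by
  rw [half (fun x => x.1 % 4 = 3)]
  rotate_left
  · intro x hx
    rw [Finset.mem_filter] at hx ⊢
    refine ⟨Q_neg hx.1, ?_⟩
    simp only [Prod.snd_neg]
    omega
  · intro x hx
    rw [Finset.mem_filter] at hx
    have := Q_par hx.1
    simp only [Prod.fst_neg]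
    omega
  · intro x; simp [sg_neg]
  congr 1
  have g5 := good_mul good_sq 5 (by norm_num)
  have g2 := good_mul good_tri 2 (by norm_num)
  rw [ph, ps, ex_th 5 good_sq, ex_th 2 good_tri, coeff_th_mul g5 g2]
  symm
  refine Finset.sum_bij' (fun x _ => (4 * x.2 - 1, 2 * x.1))
    (fun x _ => (x.2 / 2, (x.1 + 1) / 4)) ?_ ?_ ?_ ?_ ?_
  · rintro ⟨a, m⟩ hx
    rw [Finset.mem_filter] at hx
    simp only [Finset.mem_filter, mem_Q]
    have h := hx.2
    have h1 := sq_cast a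
    have h2 := tri_cast m
    simp only at h
    zify at h
    refine ⟨⟨?_, by omega⟩, by omega⟩
    rw [← h]
    linear_combination (-20) * h1 - 8 * h2
  · rintro ⟨u, v⟩ hx
    simp only [Finset.mem_filter] at hx
    obtain ⟨⟨hQ, h0⟩, h3⟩ := hx
    rw [mem_Q] at hQ
    simp only at hQ
    obtain ⟨a, ha⟩ : ∃ n, v / 2 = n := ⟨_, rfl⟩
    obtain ⟨m, hm⟩ : ∃ n, (u + 1) / 4 = n := ⟨_, rfl⟩
    have hu : u = 4 * m - 1 := by omega
    have hv : v = 2 * a := by omega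
    simp only [ha, hm]
    have h1 := sq_cast a
    have h2 := tri_cast m
    have key : 5 * sq a + 2 * tri m = N := by
      zify
      subst hu hv
      nlinarith
    simp only [Finset.mem_filter, Finset.mem_product]
    exact ⟨⟨mem_win good_sq (by omega), mem_win good_tri (by omega)⟩, key⟩
  · rintro ⟨m, n⟩ _
    ext <;> simp only <;> omega
  · rintro ⟨u, v⟩ hx
    simp only [Finset.mem_filter] at hx
    ext <;> simp only <;> omega
  · rintro ⟨m, n⟩ _
    simp only
    rw [sg_even (by omega)]; rfl

lemma sumQ_odd (N : ℕ) : ∑ x ∈ (Q (N + 1)).filter (fun x => ¬ x.2 % 2 = 0), sg x.2 =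
    2 * - coeff N (ph * ex 10 ps) := by
  rw [half (fun x => x.2 % 4 = 3)]
  rotate_left
  · intro x hx
    rw [Finset.mem_filter] at hx ⊢
    refine ⟨Q_neg hx.1, ?_⟩
    simp only [Prod.snd_neg]
    omega
  · intro x hx
    rw [Finset.mem_filter] at hx
    simp only [Prod.snd_neg]
    omega
  · intro x; simp [sg_neg]
  congr 1
  have g10 := good_mul good_tri 10 (by norm_num)
  rw [ph, ps, ex_th 10 good_tri, coeff_th_mul good_sq g10, ← Finset.sum_neg_distrib]
  symm
  refine Finset.sum_bij' (fun x _ => (2 * x.1, 4 * x.2 - 1))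
    (fun x _ => (x.1 / 2, (x.2 + 1) / 4)) ?_ ?_ ?_ ?_ ?_
  · rintro ⟨a, m⟩ hx
    rw [Finset.mem_filter] at hx
    simp only [Finset.mem_filter, mem_Q]
    have h := hx.2
    have h1 := sq_cast a
    have h2 := tri_cast m
    simp only at h
    zify at h
    refine ⟨⟨?_, by omega⟩, by omega⟩
    push_cast
    rw [← h]
    linear_combination (-4) * h1 - 40 * h2
  · rintro ⟨u, v⟩ hx
    simp only [Finset.mem_filter] at hx
    obtain ⟨⟨hQ, h0⟩, h3⟩ := hx
    have hp := Q_par hQ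
    rw [mem_Q] at hQ
    simp only at hQ hp
    obtain ⟨a, ha⟩ : ∃ n, u / 2 = n := ⟨_, rfl⟩
    obtain ⟨m, hm⟩ : ∃ n, (v + 1) / 4 = n := ⟨_, rfl⟩
    have hu : v = 4 * m - 1 := by omega
    have hv : u = 2 * a := by omega
    simp only [ha, hm]
    have h1 := sq_cast a
    have h2 := tri_cast m
    have key : sq a + 10 * tri m = N := by
      zify
      subst hu hv
      push_cast at hQ
      nlinarith
    simp only [Finset.mem_filter, Finset.mem_product]
    exact ⟨⟨mem_win good_sq (by omega), mem_win good_tri (by omega)⟩, key⟩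
  · rintro ⟨m, n⟩ _
    ext <;> simp only <;> omega
  · rintro ⟨u, v⟩ hx
    simp only [Finset.mem_filter] at hx
    have hp := Q_par hx.1.1
    simp only at hp
    ext <;> simp only <;> omega
  · rintro ⟨m, n⟩ _
    simp only
    rw [sg_odd (by omega)]; rfl

lemma sumQ_odd0 : ∑ x ∈ (Q 0).filter (fun x => ¬ x.2 % 2 = 0), sg x.2 = 0 := by
  apply Finset.sum_eq_zero
  intro x hx
  exfalso
  rw [Finset.mem_filter, mem_Q] at hx
  have h1 := hx.1
  have : x.2 ≠ 0 := by rintro h; rw [h] at hx; simp at hx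
  have : 1 ≤ x.2 ^ 2 := by have := sq_pos_of_ne_zero this (a := x.2); omega
  push_cast at h1
  nlinarith [sq_nonneg x.1]

lemma R6 : ex 5 ph * ex 2 ps - X * (ph * ex 10 ps) = ff * ex 5 ff := by
  ext N
  have h1 := sumQ_pent N
  rw [← Finset.sum_filter_add_sum_filter_not (Q N) (fun x => x.2 % 2 = 0), sumQ_even] at h1
  rw [map_sub]
  cases N with
  | zero =>
    rw [sumQ_odd0] at h1
    rw [coeff_zero_X_mul]
    linarith
  | succ N =>
    rw [sumQ_odd] at h1
    rw [coeff_succ_X_mul]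
    linarith


/-- multisets of coloured parts in `S` with total `n` -/
def MS (S : Set (ℕ × ℕ)) (n : ℕ) : Set (Multiset (ℕ × ℕ)) :=
  {M | (∀ x ∈ M, x ∈ S) ∧ (M.map Prod.fst).sum = n}

lemma MS_insert_lt {S : Set (ℕ × ℕ)} {a : ℕ × ℕ} {n : ℕ} (hn : n < a.1) :
    MS (insert a S) n = MS S n := by
  ext M
  simp only [MS, Set.mem_ofPred_eq]
  constructor
  · rintro ⟨h, hs⟩
    refine ⟨fun x hx => ?_, hs⟩
    rcases h x hx with rfl | h'
    · exfalso
      have := Multiset.le_sum_of_mem (Multiset.mem_map_of_mem Prod.fst hx)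
      omega
    · exact h'
  · rintro ⟨h, hs⟩
    exact ⟨fun x hx => Or.inr (h x hx), hs⟩

lemma MS_insert_ge {S : Set (ℕ × ℕ)} {a : ℕ × ℕ} {n : ℕ} :
    MS (insert a S) (n + a.1) = MS S (n + a.1) ∪ Set.image (fun M => a ::ₘ M) (MS (insert a S) n) := by
  ext M
  simp only [MS, Set.mem_ofPred_eq, Set.mem_union, Set.mem_image]
  constructor
  · rintro ⟨h, hs⟩
    by_cases ha : a ∈ M
    · right
      obtain ⟨M', rfl⟩ := Multiset.exists_cons_of_mem ha
      refine ⟨M', ⟨fun x hx => h x (Multiset.mem_cons_of_mem hx), ?_⟩, rfl⟩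
      simp at hs
      omega
    · left
      refine ⟨fun x hx => ?_, hs⟩
      rcases h x hx with rfl | h'
      · exact absurd hx ha
      · exact h'
  · rintro (⟨h, hs⟩ | ⟨M', ⟨h, hs⟩, rfl⟩)
    · exact ⟨fun x hx => Or.inr (h x hx), hs⟩
    · refine ⟨fun x hx => ?_, ?_⟩
      · rcases Multiset.mem_cons.1 hx with rfl | h'
        · exact Or.inl rfl
        · exact h x h'
      · simp [hs, add_comm]

lemma MS_gen (S : Finset (ℕ × ℕ)) (hS : ∀ x ∈ S, 0 < x.1) :
    (∀ n, (MS S n).Finite) ∧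
    (PowerSeries.mk fun n => ((MS S n).ncard : ℤ)) * ∏ x ∈ S, (1 - X ^ x.1) = 1 := by
  classical
  induction S using Finset.induction_on with
  | empty =>
    have h0 : ∀ n, MS (↑(∅ : Finset (ℕ × ℕ))) n = if n = 0 then {0} else ∅ := by
      intro n
      ext M
      simp only [MS, Set.mem_ofPred_eq, Finset.coe_empty, Set.mem_empty_iff_false]
      constructor
      · rintro ⟨h, hs⟩
        have : M = 0 := Multiset.eq_zero_of_forall_notMem h
        subst this
        simp at hs
        simp [← hs]
      · split_ifs with hn
        · rintro rfl; simp [hn]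
        · simp
    constructor
    · intro n
      rw [h0]; split_ifs <;> simp
    · ext n
      rw [Finset.prod_empty, mul_one, coeff_mk, h0, coeff_one]
      split_ifs <;> simp
  | insert a T ha ih =>
    obtain ⟨ihf, ihg⟩ := ih (fun x hx => hS x (Finset.mem_insert_of_mem hx))
    have hpos : 0 < a.1 := hS a (Finset.mem_insert_self _ _)
    rw [Finset.coe_insert]
    have hfin : ∀ n, (MS (insert a (T : Set (ℕ × ℕ))) n).Finite := by
      intro n
      induction n using Nat.strong_induction_on with
      | _ n ihn =>
        rcases lt_or_ge n a.1 with h | h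
        · rw [MS_insert_lt h]; exact ihf n
        · obtain ⟨k, rfl⟩ := Nat.exists_eq_add_of_le' h
          rw [MS_insert_ge]
          exact (ihf _).union ((ihn k (by omega)).image _)
    refine ⟨hfin, ?_⟩
    have step : (PowerSeries.mk fun n => ((MS (insert a (T : Set (ℕ × ℕ))) n).ncard : ℤ)) *
        (1 - X ^ a.1) = PowerSeries.mk fun n => ((MS (T : Set (ℕ × ℕ)) n).ncard : ℤ) := by
      ext n
      rw [mul_sub, mul_one, map_sub, coeff_mul_X_pow']
      simp only [coeff_mk]
      split_ifs with h
      · obtain ⟨k, rfl⟩ := Nat.exists_eq_add_of_le' h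
        rw [MS_insert_ge, Set.ncard_union_eq _ (ihf _) ((hfin k).image _),
          Set.ncard_image_of_injective _ (fun _ _ h => (Multiset.cons_inj_right a).1 h)]
        · simp
        · rw [Set.disjoint_left]
          rintro M ⟨h1, _⟩ ⟨M', _, rfl⟩
          exact ha (h1 a (Multiset.mem_cons_self _ _))
      · rw [MS_insert_lt (by omega)]
        simp
    rw [Finset.prod_insert ha, ← mul_assoc, step]
    exact ihg

/-- allowed parts, up to `n` -/
noncomputable def al (n : ℕ) : ℤ⟦X⟧ :=
  ∏ i ∈ Finset.range n, if ¬ 4 ∣ (i + 1) ∧ ¬ 5 ∣ (i + 1) then (1 - X ^ (i + 1)) else 1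

/-- the generating function -/
noncomputable def G : ℤ⟦X⟧ := PowerSeries.mk fun n => (coloredRegular 2 4 5 n : ℤ)

/-- allowed coloured parts -/
def SS (n : ℕ) : Finset (ℕ × ℕ) :=
  ((Finset.range n).filter (fun i => ¬ 4 ∣ (i + 1) ∧ ¬ 5 ∣ (i + 1))).image (· + 1) ×ˢ Finset.range 2

lemma SS_prod (n : ℕ) : ∏ x ∈ SS n, ((1 : ℤ⟦X⟧) - X ^ x.1) = al n ^ 2 := by
  rw [SS, Finset.prod_product, Finset.prod_image (fun x _ y _ h => by simpa using h)]
  simp only [Finset.prod_const, Finset.card_range]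
  rw [Finset.prod_pow, al, Finset.prod_filter]

lemma cr_eq (n d : ℕ) (h : d ≤ n) : coloredRegular 2 4 5 d = (MS (SS n) d).ncard := by
  rw [coloredRegular, ← Nat.card_coe_set_eq]
  apply Nat.card_congr
  apply Equiv.subtypeEquivRight
  intro M
  change _ ↔ (∀ x ∈ M, x ∈ ((SS n : Finset (ℕ × ℕ)) : Set (ℕ × ℕ))) ∧ (M.map Prod.fst).sum = d
  constructor
  · rintro ⟨h1, h2⟩
    refine ⟨fun x hx => ?_, h2⟩
    obtain ⟨a, b, c⟩ := h1 x hx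
    have hle := Multiset.le_sum_of_mem (Multiset.mem_map_of_mem Prod.fst hx)
    have hne : x.1 ≠ 0 := by intro h0; rw [h0] at a; simp at a
    simp only [SS, Finset.coe_product, Set.mem_prod, Finset.mem_coe, Finset.mem_image,
      Finset.mem_filter, Finset.mem_range]
    refine ⟨⟨x.1 - 1, ?_, by omega⟩, c⟩
    rw [show x.1 - 1 + 1 = x.1 by omega]
    exact ⟨by omega, a, b⟩
  · rintro ⟨h1, h2⟩
    refine ⟨fun x hx => ?_, h2⟩
    have := h1 x hx
    simp only [SS, Finset.coe_product, Set.mem_prod, Finset.mem_coe, Finset.mem_image,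
      Finset.mem_filter, Finset.mem_range] at this
    obtain ⟨⟨i, ⟨_, a, b⟩, e⟩, c⟩ := this
    rw [← e]
    exact ⟨a, b, c⟩

lemma tendsto_G : Tendsto (fun n => G * al n ^ 2) atTop (𝓝 1) := by
  refine tendsto_of_dvd (u := fun _ => 1) tendsto_const_nhds fun n => ?_
  have h := (MS_gen (SS n) (fun x hx => by
    simp only [SS, Finset.mem_product, Finset.mem_image] at hx
    obtain ⟨⟨i, _, e⟩, _⟩ := hx
    omega)).2
  rw [SS_prod] at h
  rw [← h, ← sub_mul]
  apply Dvd.dvd.mul_right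
  rw [X_pow_dvd_iff]
  intro d hd
  rw [map_sub, G, coeff_mk, coeff_mk, cr_eq n d hd.le, sub_self]

set_option maxHeartbeats 1000000 in
lemma key_prod (Y : ℕ → ℤ⟦X⟧) :
    (∏ a ∈ Finset.range 20, if ¬ 4 ∣ (a + 1) ∧ ¬ 5 ∣ (a + 1) then Y (a + 1) else 1) *
        (∏ a ∈ Finset.range 5, Y (4 * a + 4)) * (∏ a ∈ Finset.range 4, Y (5 * a + 5)) =
        (∏ a ∈ Finset.range 20, Y (a + 1)) * Y 20 := by
  simp only [Finset.prod_range_succ, Finset.prod_range_zero]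
  norm_num
  ring

set_option maxHeartbeats 1000000 in
lemma al_eq (K : ℕ) : al (20 * K) * pr 4 (5 * K) * pr 5 (4 * K) = pr 1 (20 * K) * pr 20 K := by
  induction K with
  | zero => simp [al, pr]
  | succ K ih =>
    have hal : al (20 * (K + 1)) = al (20 * K) * ∏ a ∈ Finset.range 20,
        if ¬ 4 ∣ (a + 1) ∧ ¬ 5 ∣ (a + 1) then (1 - X ^ (20 * K + a + 1)) else 1 := by
      rw [al, al, show 20 * (K + 1) = 20 * K + 20 by ring, Finset.prod_range_add]
      congr 1
      refine Finset.prod_congr rfl fun a _ => ?_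
      have h1 : 4 ∣ 20 * K + a + 1 ↔ 4 ∣ a + 1 := by omega
      have h2 : 5 ∣ 20 * K + a + 1 ↔ 5 ∣ a + 1 := by omega
      simp only [h1, h2]
    have hpr : ∀ k r : ℕ, pr k (r * (K + 1)) = pr k (r * K) *
        ∏ a ∈ Finset.range r, (1 - X ^ (k * (r * K + a + 1))) := by
      intro k r
      rw [pr, pr, show r * (K + 1) = r * K + r by ring, Finset.prod_range_add]
    have h1 : pr 20 (K + 1) = pr 20 K * (1 - X ^ (20 * (K + 1))) := by
      rw [pr, pr, Finset.prod_range_succ]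
    rw [hal, hpr, hpr, hpr, h1]
    have key : (∏ a ∈ Finset.range 20,
        if ¬ 4 ∣ (a + 1) ∧ ¬ 5 ∣ (a + 1) then ((1 : ℤ⟦X⟧) - X ^ (20 * K + a + 1)) else 1) *
        (∏ a ∈ Finset.range 5, (1 - X ^ (4 * (5 * K + a + 1)))) *
        (∏ a ∈ Finset.range 4, (1 - X ^ (5 * (4 * K + a + 1)))) =
        (∏ a ∈ Finset.range 20, (1 - X ^ (1 * (20 * K + a + 1)))) * (1 - X ^ (20 * (K + 1))) := by
      have e4 : ∀ a, 4 * (5 * K + a + 1) = 20 * K + (4 * a + 4) := fun a => by ring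
      have e5 : ∀ a, 5 * (4 * K + a + 1) = 20 * K + (5 * a + 5) := fun a => by ring
      have e1 : ∀ a, 20 * K + a + 1 = 20 * K + (a + 1) := fun a => by ring
      have e20 : 20 * (K + 1) = 20 * K + 20 := by ring
      simp only [e4, e5, e20, one_mul]
      simp only [e1]
      exact key_prod (fun j => (1 : ℤ⟦X⟧) - X ^ (20 * K + j))
    linear_combination (∏ a ∈ Finset.range 20, (1 - X ^ (1 * (20 * K + a + 1)))) *
      (1 - X ^ (20 * (K + 1))) * ih + al (20 * K) * pr 4 (5 * K) * pr 5 (4 * K) * key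

lemma G_eq : G * (ff * ex 20 ff) ^ 2 = (ex 4 ff * ex 5 ff) ^ 2 := by
  have t : ∀ r : ℕ, 0 < r → Tendsto (fun n : ℕ => r * n) atTop atTop := fun r hr =>
    tendsto_id.const_mul_atTop' hr
  have h1 := ((tendsto_pr1.comp (t 20 (by norm_num))).mul (tendsto_pr 20)).pow 2
  have h2 := (tendsto_const_nhds (x := G)).mul h1
  have h3 := ((((tendsto_pr 4).comp (t 5 (by norm_num))).mul
    ((tendsto_pr 5).comp (t 4 (by norm_num)))).pow 2)
  have h4 := (tendsto_G.comp (t 20 (by norm_num))).mul h3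
  rw [one_mul] at h4
  refine tendsto_nhds_unique h2 (h4.congr fun n => ?_)
  simp only [Function.comp]
  rw [← al_eq]
  ring

lemma exists_inv {f : ℤ⟦X⟧} (h : constantCoeff f = 1) : ∃ i, f * i = 1 := by
  have : IsUnit f := by rw [PowerSeries.isUnit_iff_constantCoeff, h]; exact isUnit_one
  exact this.exists_right_inv

lemma coeff_odd (A B : ℤ⟦X⟧) (k : ℕ) :
    coeff (2 * k + 1) (ex 2 A + X * ex 2 B) = coeff k B := by
  rw [map_add, coeff_succ_X_mul, ex, coeff_expand_mul, coeff_expand_of_not_dvd, zero_add]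
  omega

lemma ex2_inj {A B : ℤ⟦X⟧} (h : ex 2 A = ex 2 B) : A = B := by
  ext k
  have := congrArg (coeff (2 * k)) h
  rwa [ex, coeff_expand_mul, coeff_expand_mul] at this

lemma frob5 (f : ℤ⟦X⟧) : ∃ c, ex 5 f = f ^ 5 + 5 * c := by
  have : Fact (Nat.Prime 5) := ⟨by norm_num⟩
  have h : PowerSeries.map (Int.castRingHom (ZMod 5)) (ex 5 f - f ^ 5) = 0 := by
    rw [map_sub, map_pow, ex, PowerSeries.map_expand]
    have h2 := MvPowerSeries.map_frobenius_expand (p := 5) (hp := by norm_num)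
      (f := (PowerSeries.map (Int.castRingHom (ZMod 5)) f : MvPowerSeries Unit (ZMod 5)))
    rw [ZMod.frobenius_zmod, MvPowerSeries.map_id] at h2
    exact sub_eq_zero.2 h2
  have h5 : ∀ n, (5 : ℤ) ∣ coeff n (ex 5 f - f ^ 5) := by
    intro n
    have := congrArg (coeff n) h
    rw [coeff_map, map_zero] at this
    exact (ZMod.intCast_zmod_eq_zero_iff_dvd _ 5).1 this
  choose c hc using h5
  refine ⟨PowerSeries.mk c, ?_⟩
  rw [← sub_eq_iff_eq_add']
  ext n
  rw [hc, show (5 : ℤ⟦X⟧) = C (5 : ℤ) by simp, coeff_C_mul, coeff_mk]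

lemma S0 : G * (mm * ex 10 ps) = ex 2 ps * ex 5 mm := by
  have a1 := R1
  have a2 := congrArg (ex 10) R2
  have a3 := congrArg (ex 5) R1
  have a4 := congrArg (ex 2) R2
  have g := G_eq
  simp only [map_mul, map_pow] at a2 a3 a4
  rw [ex_ex 10 2 20 rfl] at a2
  rw [ex_ex 5 2 10 rfl] at a3
  rw [ex_ex 2 2 4 rfl] at a4
  have n2 := ne0 (cc_ex 2 cc_ff)
  have n10 := ne0 (cc_ex 10 cc_ff)
  apply mul_right_cancel₀ (mul_ne_zero n2 n10)
  linear_combination g + G * ex 10 ps * ex 10 ff * a1 + G * ff ^ 2 * a2 -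
    ex 2 ps * ex 2 ff * a3 - ex 5 ff ^ 2 * a4

lemma R6_4 : ex 20 ph * ex 8 ps - X ^ 4 * (ex 4 ph * ex 40 ps) = ex 4 ff * ex 20 ff := by
  have h := congrArg (ex 4) R6
  simp only [map_mul, map_sub, ex_X] at h
  rwa [ex_ex 4 5 20 rfl, ex_ex 4 2 8 rfl, ex_ex 4 10 40 rfl, ex_ex 4 5 20 rfl] at h

lemma R5_5 : ex 5 ph = ex 20 ph + 2 * (X ^ 5 * ex 40 ps) := by
  have h := congrArg (ex 5) R5
  simp only [map_mul, map_add, ex_X, map_ofNat] at h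
  rwa [ex_ex 5 4 20 rfl, ex_ex 5 8 40 rfl] at h

lemma R5'_5 : ex 5 mm = ex 20 ph - 2 * (X ^ 5 * ex 40 ps) := by
  have h := congrArg (ex 5) R5'
  simp only [map_mul, map_sub, ex_X, map_ofNat] at h
  rwa [ex_ex 5 4 20 rfl, ex_ex 5 8 40 rfl] at h

lemma S1 : ∃ Z, (∀ k, coeff (2 * k + 1) G = 2 * coeff k Z) ∧
    Z * (mm ^ 2 * ex 5 ps) = ps * (ex 2 ff * ex 10 ff) := by
  obtain ⟨i, hi⟩ := exists_inv (f := mm ^ 2 * ex 5 ps) (by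
    rw [map_mul, map_pow, cc_mm, cc_ex 5 cc_ps]; norm_num)
  refine ⟨i * ps * (ex 2 ff * ex 10 ff), fun k => ?_, by
    linear_combination ps * (ex 2 ff * ex 10 ff) * hi⟩
  have key : G = ex 2 (i * ps * (ex 2 ph * ex 10 ph - 4 * X ^ 3 * (ex 4 ps * ex 20 ps))) +
      X * ex 2 (2 * (i * ps * (ex 2 ff * ex 10 ff))) := by
    have hi2 := congrArg (ex 2) hi
    simp only [map_mul, map_pow, map_one] at hi2
    simp only [map_mul, map_sub, map_pow, ex_X, map_ofNat]
    rw [ex_ex 2 5 10 rfl] at hi2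
    rw [ex_ex 2 2 4 rfl, ex_ex 2 10 20 rfl, ex_ex 2 4 8 rfl, ex_ex 2 20 40 rfl,
      ex_ex 2 2 4 rfl, ex_ex 2 10 20 rfl]
    have h0 := S0
    rw [R5'_5] at h0
    have h5 := R5
    have h3 := R3
    have h6 := R6_4
    linear_combination (-G) * hi2 - ex 2 i * G * ex 10 ps * h3 + ex 2 i * ph * h0 +
      ex 2 i * ex 2 ps * (ex 20 ph - 2 * (X ^ 5 * ex 40 ps)) * h5 +
      2 * X * ex 2 i * ex 2 ps * h6
  rw [key, coeff_odd, show (2 : ℤ⟦X⟧) = C (2 : ℤ) by simp, coeff_C_mul]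

lemma R7k (k : ℕ) [NeZero k] : ∃ t, ex k mm = 1 + 2 * t := by
  obtain ⟨t, ht⟩ := R7
  refine ⟨ex k t, ?_⟩
  rw [ht]; simp only [map_mul, map_add, map_one, map_ofNat]

lemma R8 : ∃ t, ph = 1 + 2 * t := by
  obtain ⟨t, ht⟩ := R7
  refine ⟨ng t, ?_⟩
  rw [← ng_mm, ht]; simp only [map_mul, map_add, map_one, map_ofNat]

lemma R9 : ps * mm = ff * ex 2 ff := by
  have h1 := R1
  have h2 := R2
  apply mul_right_cancel₀ (mul_ne_zero (ne0 cc_ff) (ne0 (cc_ex 2 cc_ff)))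
  linear_combination ps * ff * h1 + ff ^ 2 * h2

lemma R2_5 : ex 5 ps * ex 5 ff = ex 10 ff ^ 2 := by
  have h := congrArg (ex 5) R2
  simp only [map_mul, map_pow] at h
  rwa [ex_ex 5 2 10 rfl] at h

lemma S2 (Z : ℤ⟦X⟧) (hZ : Z * (mm ^ 2 * ex 5 ps) = ps * (ex 2 ff * ex 10 ff)) :
    ∃ A W D, Z = (ex 2 A + X * ex 2 W) + 4 * D ∧
      W * ex 5 ff = ff ^ 2 * (2 * (ex 2 ff * ex 10 ff * ps) - ex 5 ps) := by
  obtain ⟨j, hj⟩ := exists_inv (f := ex 5 ff) (cc_ex 5 cc_ff)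
  have b1 : Z * (mm ^ 2 * ex 2 mm ^ 2 * ex 10 ff) = ex 2 ff ^ 2 * (ff * ex 5 ff * ph) := by
    have h9 := R9
    have h2 := R2_5
    have h3 := R3
    apply mul_right_cancel₀ (ne0 (cc_ex 10 cc_ff))
    linear_combination ph * mm * ex 5 ff * hZ - Z * mm ^ 2 * ex 2 mm ^ 2 * h2
      - Z * (mm ^ 2 * ex 5 ps) * ex 5 ff * h3 + ph * ex 5 ff * ex 2 ff * ex 10 ff * h9
  obtain ⟨t, ht⟩ := R7
  obtain ⟨t2, ht2⟩ := R7k 2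
  obtain ⟨s, hs⟩ := R8
  have hj2 := congrArg (ex 2) hj
  simp only [map_mul, map_one] at hj2
  rw [ex_ex 2 5 10 rfl] at hj2
  have h6 := R6
  have h64 := R6_4
  have h5 := R5
  have h55 := R5_5
  -- everything modulo four
  have b2 : ∃ D, Z * ex 10 ff = ex 2 ff ^ 2 * ex 2 ps * (ex 4 ph * ex 20 ph) +
      X * (ex 2 ff ^ 2 * (2 * (ex 4 ff * ex 20 ff * ex 2 ps) - ex 10 ps)) + 4 * D := by
    have m1 : mm ^ 2 = 1 + 4 * (t + t ^ 2) := by rw [ht]; ring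
    have m2 : ex 2 mm ^ 2 = 1 + 4 * (t2 + t2 ^ 2) := by rw [ht2]; ring
    have m3 : ph ^ 2 = 1 + 4 * (s + s ^ 2) := by rw [hs]; ring
    have m4 : ph * ex 5 ph = ex 4 ph * ex 20 ph + 2 * X * (ex 4 ff * ex 20 ff) +
        4 * (X ^ 6 * ex 8 ps * ex 40 ps + X ^ 5 * ex 4 ph * ex 40 ps) := by
      linear_combination ex 5 ph * h5 + (ex 4 ph + 2 * (X * ex 8 ps)) * h55 + 2 * X * h64
    rw [m1, m2] at b1
    refine ⟨-(Z * ex 10 ff * ((t + t ^ 2) + (t2 + t2 ^ 2) + 4 * (t + t ^ 2) * (t2 + t2 ^ 2))) +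
      ex 2 ff ^ 2 * ex 2 ps * (X ^ 6 * ex 8 ps * ex 40 ps + X ^ 5 * ex 4 ph * ex 40 ps) -
      X * ex 2 ff ^ 2 * ex 10 ps * (s + s ^ 2), ?_⟩
    linear_combination b1 - ex 2 ff ^ 2 * ph * h6 + ex 2 ff ^ 2 * ex 2 ps * m4 -
      ex 2 ff ^ 2 * X * ex 10 ps * m3
  obtain ⟨D, hD⟩ := b2
  refine ⟨j * (ff ^ 2 * ps * (ex 2 ph * ex 10 ph)),
    j * (ff ^ 2 * (2 * (ex 2 ff * ex 10 ff * ps) - ex 5 ps)), D * ex 2 j, ?_, ?_⟩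
  · simp only [map_mul, map_sub, map_pow, map_ofNat]
    rw [ex_ex 2 2 4 rfl, ex_ex 2 10 20 rfl, ex_ex 2 2 4 rfl, ex_ex 2 10 20 rfl, ex_ex 2 5 10 rfl]
    linear_combination ex 2 j * hD - Z * hj2
  · linear_combination (ff ^ 2 * (2 * (ex 2 ff * ex 10 ff * ps) - ex 5 ps)) * hj

lemma S3 (W : ℤ⟦X⟧)
    (hW : W * ex 5 ff = ff ^ 2 * (2 * (ex 2 ff * ex 10 ff * ps) - ex 5 ps)) :
    ∃ A D, W = (ex 2 A + X * ex 2 0) + 4 * D := by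
  have h2 := R2
  have h1 := R1
  have h25 := R2_5
  have h15 := congrArg (ex 5) R1
  have h35 := congrArg (ex 5) R3
  have h12 := congrArg (ex 2) R1
  have h910 := congrArg (ex 10) R9
  simp only [map_mul, map_pow] at h15 h35 h12 h910
  rw [ex_ex 5 2 10 rfl] at h15 h35
  rw [ex_ex 2 2 4 rfl] at h12
  rw [ex_ex 10 2 20 rfl] at h910
  have b1 : W * ex 5 mm = 2 * (ff * ex 5 ff * ex 2 ff ^ 3) - mm * ex 2 ff * ex 10 ff := by
    apply mul_right_cancel₀ (ne0 (cc_ex 10 cc_ff))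
    linear_combination ex 5 ff * hW + W * h15 + 2 * ff * ex 5 ff * ex 2 ff * ex 10 ff * h2 -
      ff ^ 2 * h25 + ex 10 ff ^ 2 * h1
  have h6 := R6
  have h64 := R6_4
  have h55 := R5_5
  have h5' := R5'
  obtain ⟨s, hs⟩ := R8
  obtain ⟨t2, ht2⟩ := R7k 2
  obtain ⟨t10, ht10⟩ := R7k 10
  have hs5 : ex 5 ph = 1 + 2 * ex 5 s := by
    rw [hs]; simp only [map_mul, map_add, map_one, map_ofNat]
  have m4 : mm * ex 5 ph = ex 4 ph * ex 20 ph - 2 * X * (ex 4 ff * ex 20 ff) -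
      4 * (X ^ 6 * ex 8 ps * ex 40 ps) := by
    linear_combination ex 5 ph * h5' + (ex 4 ph - 2 * (X * ex 8 ps)) * h55 - 2 * X * h64
  have m5 : ∃ D, ff * ex 5 ff * ex 5 ph = ex 2 ps - X * ex 10 ps + 2 * D := by
    refine ⟨(ex 5 s * ex 2 ps - X * s * ex 10 ps) + ff * ex 5 ff * ex 5 s, ?_⟩
    linear_combination (-1) * h6 + ff * ex 5 ff * hs5 + ex 2 ps * hs5 - X * ex 10 ps * hs
  obtain ⟨D, hD⟩ := m5
  have m6 : ex 10 ps * ex 2 ff ^ 3 - ex 4 ff * ex 20 ff * ex 2 ff * ex 10 ff =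
      2 * (ex 2 ff * ex 4 ff * ex 10 ps * (t2 - t10)) := by
    linear_combination (-ex 10 ps * ex 2 ff) * h12 + ex 4 ff * ex 2 ff * h910 +
      ex 2 ff * ex 4 ff * ex 10 ps * (ht2 - ht10)
  have m7 : ex 10 mm ^ 2 = 1 + 4 * (t10 + t10 ^ 2) := by rw [ht10]; ring
  refine ⟨2 * ps * ff ^ 3 - ex 2 ph * ex 10 ph * ff * ex 5 ff,
    -(W * (t10 + t10 ^ 2)) + D * ex 2 ff ^ 3 + X ^ 6 * ex 8 ps * ex 40 ps * ex 2 ff * ex 10 ff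
    - X * (ex 2 ff * ex 4 ff * ex 10 ps * (t2 - t10)), ?_⟩
  simp only [map_mul, map_sub, map_pow, map_ofNat, map_zero]
  rw [ex_ex 2 2 4 rfl, ex_ex 2 10 20 rfl, ex_ex 2 5 10 rfl]
  linear_combination ex 5 ph * b1 - W * h35 - W * m7 + 2 * ex 2 ff ^ 3 * hD -
    ex 2 ff * ex 10 ff * m4 - 2 * X * m6

lemma dvd8 (n : ℕ) : (8 : ℤ) ∣ coeff (8 * n + 7) G := by
  obtain ⟨Z, hG, hZ⟩ := S1
  obtain ⟨A, W, D, hZ2, hW⟩ := S2 Z hZ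
  obtain ⟨A', D', hW2⟩ := S3 W hW
  have c4 : (4 : ℤ⟦X⟧) = C (4 : ℤ) := by simp
  have e1 : coeff (8 * n + 7) G = 2 * coeff (4 * n + 3) Z := by
    rw [← hG, show 8 * n + 7 = 2 * (4 * n + 3) + 1 by ring]
  have e2 : coeff (4 * n + 3) Z = coeff (2 * n + 1) W + 4 * coeff (4 * n + 3) D := by
    rw [hZ2, map_add, c4, coeff_C_mul]
    rw [show 4 * n + 3 = 2 * (2 * n + 1) + 1 by ring, coeff_odd]
  have e3 : coeff (2 * n + 1) W = 4 * coeff (2 * n + 1) D' := by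
    rw [hW2, map_add, c4, coeff_C_mul, coeff_odd, map_zero, zero_add]
  rw [e1, e2, e3]
  exact ⟨coeff (2 * n + 1) D' + coeff (4 * n + 3) D, by ring⟩

lemma Q2 : ex 4 ph ^ 2 + 4 * X ^ 2 * ex 8 ps ^ 2 = ex 2 ph ^ 2 := by
  have h5 := R5
  have h5' := R5'
  have h3 := R3
  have a : ex 2 ph ^ 2 - 4 * X * ex 4 ps ^ 2 = mm ^ 2 := by
    apply ex2_inj
    simp only [map_mul, map_sub, map_pow, map_ofNat, ex_X]
    rw [ex_ex 2 2 4 rfl, ex_ex 2 4 8 rfl]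
    linear_combination h3 - mm * h5 - (ex 4 ph + 2 * (X * ex 8 ps)) * h5'
  have b := congrArg ng a
  simp only [map_mul, map_sub, map_pow, map_ofNat, ng_X, ng_mm] at b
  rw [ng_ex 2 (by decide), ng_ex 4 (by decide)] at b
  have c := congrArg (ex 2) b
  simp only [map_mul, map_sub, map_neg, map_pow, map_ofNat, ex_X] at c
  rw [ex_ex 2 2 4 rfl, ex_ex 2 4 8 rfl] at c
  linear_combination c

lemma dvd5 (n : ℕ) : (5 : ℤ) ∣ coeff (8 * n + 7) G := by
  obtain ⟨a, ha⟩ := frob5 mm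
  obtain ⟨b, hb⟩ := frob5 (ex 2 ps)
  rw [ex_ex 5 2 10 rfl] at hb
  have h0 := S0
  obtain ⟨v, hv⟩ := exists_inv (f := mm) cc_mm
  obtain ⟨w, hw⟩ := exists_inv (f := ps) cc_ps
  have hw2 := congrArg (ex 2) hw
  simp only [map_mul, map_one] at hw2
  have q2 := Q2
  have q4 := congrArg (ex 4) R4
  have q2' := congrArg (ex 2) R4
  simp only [map_mul, map_pow] at q4 q2'
  rw [ex_ex 4 2 8 rfl] at q4
  rw [ex_ex 2 2 4 rfl] at q2'
  have hm : mm ^ 4 = (ex 4 ph ^ 4 + 24 * X ^ 2 * ex 4 ph ^ 2 * ex 8 ps ^ 2 +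
      16 * X ^ 4 * ex 8 ps ^ 4) - 8 * X * ex 2 ps ^ 4 := by
    rw [R5']
    linear_combination (-8) * X * ex 4 ph * ex 8 ps * q2 - 8 * X * ex 2 ph ^ 2 * q4 -
      8 * X * (ex 2 ph * ex 4 ps + ex 2 ps ^ 2) * q2'
  rw [ha, hb] at h0
  have hv4 : mm * ex 2 ps * (v * ex 2 w) = 1 := by
    linear_combination mm * v * hw2 + hv
  have h1 : G * ex 2 ps ^ 4 = mm ^ 4 + 5 * ((ex 2 ps * a - G * mm * b) * (v * ex 2 w)) := by
    linear_combination (v * ex 2 w) * h0 - (G * ex 2 ps ^ 4 - mm ^ 4) * hv4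
  have hw4 : ex 2 ps ^ 4 * ex 2 w ^ 4 = 1 := by rw [← mul_pow, hw2, one_pow]
  have h2 : G = (ex 2 (w ^ 4 * (ex 2 ph ^ 4 + 24 * X * ex 2 ph ^ 2 * ex 4 ps ^ 2 +
      16 * X ^ 2 * ex 4 ps ^ 4)) + X * ex 2 (-8)) +
      5 * ((ex 2 ps * a - G * mm * b) * (v * ex 2 w) * ex 2 w ^ 4) := by
    simp only [map_mul, map_add, map_neg, map_pow, map_ofNat, ex_X]
    rw [ex_ex 2 2 4 rfl, ex_ex 2 4 8 rfl]
    linear_combination ex 2 w ^ 4 * h1 + ex 2 w ^ 4 * hm - (G + 8 * X) * hw4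
  rw [h2, map_add, show 8 * n + 7 = 2 * (4 * n + 3) + 1 by ring, coeff_odd,
    show (-8 : ℤ⟦X⟧) = C (-8 : ℤ) by simp, coeff_C, if_neg (by omega), zero_add,
    show (5 : ℤ⟦X⟧) = C (5 : ℤ) by simp, coeff_C_mul]
  exact dvd_mul_right _ _

end CR

theorem stmt_16 (n : ℕ) :
    coloredRegular 2 4 5 (8 * n + 7) ≡ 0 [MOD 40] := by
  have h8 := CR.dvd8 n
  have h5 := CR.dvd5 n
  rw [CR.G, PowerSeries.coeff_mk] at h8 h5
  rw [Nat.modEq_zero_iff_dvd]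
  omega
end

section
/- For every nonnegative integer n, b^2_{8,5}(4n+1) ≡ 2·b^2_{2,5}(n) (mod 10). Moreover, for every positive odd integer t and every nonnegative integer n, b^3_{2,3t}(3n+2) ≡ 0 (mod 6). -/
open PowerSeries Filter Topology
open scoped PowerSeries.WithPiTopology

namespace Cb

theorem cont_expand (k : ℕ) (hk : k ≠ 0) : Continuous (expand k hk : ℤ⟦X⟧ → ℤ⟦X⟧) := by
  rw [continuous_iff_continuousAt]
  intro f
  rw [ContinuousAt, WithPiTopology.tendsto_iff_coeff_tendsto]
  intro d
  simp only [coeff_expand]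
  split_ifs
  · exact (WithPiTopology.continuous_coeff ℤ _).tendsto f
  · exact tendsto_const_nhds

theorem cont_rescale (a : ℤ) : Continuous (rescale a : ℤ⟦X⟧ → ℤ⟦X⟧) := by
  rw [continuous_iff_continuousAt]
  intro f
  rw [ContinuousAt, WithPiTopology.tendsto_iff_coeff_tendsto]
  intro d
  simp only [coeff_rescale]
  exact ((WithPiTopology.continuous_coeff ℤ _).tendsto f).const_mul _

/-- The Euler product with all exponents multiplied by `k`. -/
noncomputable def P (k : ℕ) : ℤ⟦X⟧ := ∏' n : ℕ, (1 - X ^ (k * (n + 1)))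

theorem hasProd_P (k : ℕ) (hk : k ≠ 0) : HasProd (fun n : ℕ => (1 - X ^ (k * (n + 1)) : ℤ⟦X⟧)) (P k) := by
  have h := (WithPiTopology.multipliable_one_sub_X_pow ℤ).hasProd
  have h2 := h.map (expand k hk : ℤ⟦X⟧ →ₐ[ℤ] ℤ⟦X⟧) (cont_expand k hk)
  have h3 : (⇑(expand k hk : ℤ⟦X⟧ →ₐ[ℤ] ℤ⟦X⟧) ∘ fun n : ℕ ↦ (1 : ℤ⟦X⟧) - X ^ (n + 1)) =
      (fun n : ℕ => (1 - X ^ (k * (n + 1)) : ℤ⟦X⟧)) := by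
    funext n
    simp [pow_mul]
  rw [h3] at h2
  exact h2.multipliable.hasProd

theorem expand_P (j k : ℕ) (hj : j ≠ 0) (hk : k ≠ 0) : expand j hj (P k) = P (j * k) := by
  have h2 := (hasProd_P k hk).map (expand j hj : ℤ⟦X⟧ →ₐ[ℤ] ℤ⟦X⟧) (cont_expand j hj)
  have h3 : (⇑(expand j hj : ℤ⟦X⟧ →ₐ[ℤ] ℤ⟦X⟧) ∘ fun n : ℕ ↦ (1 : ℤ⟦X⟧) - X ^ (k * (n + 1))) =
      (fun n : ℕ => (1 - X ^ (j * k * (n + 1)) : ℤ⟦X⟧)) := by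
    funext n
    simp [pow_mul]
  rw [h3] at h2
  exact h2.unique (hasProd_P _ (by positivity))

theorem tendsto_P (k : ℕ) (hk : k ≠ 0) :
    Tendsto (fun N => ∏ n ∈ Finset.range N, (1 - X ^ (k * (n + 1)) : ℤ⟦X⟧)) atTop (𝓝 (P k)) :=
  (hasProd_P k hk).tendsto_prod_nat

theorem P_const (k : ℕ) (hk : k ≠ 0) : constantCoeff (P k) = 1 := by
  have h := ((WithPiTopology.continuous_constantCoeff ℤ).tendsto _).comp (tendsto_P k hk)
  refine tendsto_nhds_unique h ?_
  have : (⇑constantCoeff ∘ fun N => ∏ n ∈ Finset.range N, (1 - X ^ (k * (n + 1)) : ℤ⟦X⟧))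
     = fun _ => 1 := by
    funext N
    simp only [Function.comp, map_prod]
    apply Finset.prod_eq_one
    intro i _
    simp [hk]
  rw [this]
  exact tendsto_const_nhds

theorem P_isUnit (k : ℕ) (hk : k ≠ 0) : IsUnit (P k) := by
  rw [PowerSeries.isUnit_iff_constantCoeff, P_const k hk]
  exact isUnit_one

theorem dbl {k : ℕ} (hk : k ≠ 0) : Tendsto (fun N : ℕ => k * N) atTop atTop :=
  tendsto_id.const_mul_atTop' (Nat.pos_of_ne_zero hk)

theorem neg_prod (N : ℕ) :
    (∏ n ∈ Finset.range (2 * N), (1 - (-X) ^ (n + 1) : ℤ⟦X⟧)) *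
      (∏ n ∈ Finset.range (2 * N), (1 - X ^ (1 * (n + 1)) : ℤ⟦X⟧)) *
      (∏ n ∈ Finset.range N, (1 - X ^ (4 * (n + 1)) : ℤ⟦X⟧)) =
    (∏ n ∈ Finset.range (2 * N), (1 - X ^ (2 * (n + 1)) : ℤ⟦X⟧)) *
      (∏ n ∈ Finset.range N, (1 - X ^ (2 * (n + 1)) : ℤ⟦X⟧)) ^ 2 := by
  induction N with
  | zero => simp
  | succ N ih =>
    rw [show 2 * (N + 1) = 2 * N + 1 + 1 by ring]
    simp only [Finset.prod_range_succ]
    have e1 : (-X : ℤ⟦X⟧) ^ (2 * N + 1) = - X ^ (2 * N + 1) := Odd.neg_pow ⟨N, rfl⟩ _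
    have e2 : (-X : ℤ⟦X⟧) ^ (2 * N + 1 + 1) = X ^ (2 * N + 1 + 1) := Even.neg_pow ⟨N + 1, by ring⟩ _
    rw [e1, e2]
    generalize (∏ n ∈ Finset.range (2 * N), (1 - (-X) ^ (n + 1) : ℤ⟦X⟧)) = a at *
    generalize (∏ n ∈ Finset.range (2 * N), (1 - X ^ (1 * (n + 1)) : ℤ⟦X⟧)) = b at *
    generalize (∏ n ∈ Finset.range N, (1 - X ^ (4 * (n + 1)) : ℤ⟦X⟧)) = c at *
    generalize (∏ n ∈ Finset.range (2 * N), (1 - X ^ (2 * (n + 1)) : ℤ⟦X⟧)) = d at *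
    generalize (∏ n ∈ Finset.range N, (1 - X ^ (2 * (n + 1)) : ℤ⟦X⟧)) = e at *
    have e3 : (X : ℤ⟦X⟧) ^ (2 * N + 1 + 1) = X ^ (2 * (N + 1)) := by ring
    have e4 : (X : ℤ⟦X⟧) ^ (2 * (2 * N + 1 + 1)) = X ^ (4 * (N + 1)) := by ring
    have e5 : (X : ℤ⟦X⟧) ^ (2 * (2 * N + 1)) = (X ^ (2 * N + 1)) ^ 2 := by ring
    rw [one_mul, one_mul, e3, e4, e5]
    generalize (X : ℤ⟦X⟧) ^ (2 * N + 1) = u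
    generalize (X : ℤ⟦X⟧) ^ (2 * (N + 1)) = v
    generalize (X : ℤ⟦X⟧) ^ (4 * (N + 1)) = w
    linear_combination (1 + u) * (1 - v) ^ 2 * (1 - u) * (1 - w) * ih

theorem P_neg : rescale (-1) (P 1) * P 1 * P 4 = P 2 ^ 3 := by
  have h1 : Tendsto (fun N => ∏ n ∈ Finset.range N, (1 - (-X) ^ (n + 1) : ℤ⟦X⟧)) atTop
      (𝓝 (rescale (-1) (P 1))) := by
    have := ((cont_rescale (-1)).tendsto _).comp (tendsto_P 1 one_ne_zero)
    refine this.congr fun N => ?_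
    simp [map_prod]
  have h := ((h1.comp (dbl two_ne_zero)).mul ((tendsto_P 1 one_ne_zero).comp (dbl two_ne_zero))).mul
    (tendsto_P 4 (by norm_num))
  have h' := ((tendsto_P 2 two_ne_zero).comp (dbl two_ne_zero)).mul
    ((tendsto_P 2 two_ne_zero).pow 2)
  rw [show P 2 ^ 3 = P 2 * P 2 ^ 2 by ring]
  refine tendsto_nhds_unique h (h'.congr fun N => ?_)
  exact (neg_prod N).symm

/-- Factor for a condition. -/
noncomputable def fac (p : ℕ → Prop) [DecidablePred p] (j : ℕ) : ℤ⟦X⟧ :=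
  if j ≠ 0 ∧ p j then 1 - X ^ j else 1

theorem hasProd_fac (l : ℕ) (hl : l ≠ 0) : HasProd (fac (fun j => l ∣ j)) (P l) := by
  have hinj : Function.Injective (fun n : ℕ => l * (n + 1)) := by
    intro a b h
    have := Nat.eq_of_mul_eq_mul_left (Nat.pos_of_ne_zero hl) h
    omega
  rw [← hinj.hasProd_iff]
  · convert hasProd_P l hl using 1
    funext n
    simp [fac, hl]
  · intro x hx
    unfold fac
    rw [if_neg]
    rintro ⟨h0, c, rfl⟩
    apply hx
    have : c ≠ 0 := by rintro rfl; simp at h0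
    exact ⟨c - 1, by simp only; congr 1; omega⟩

theorem hasProd_D (l m : ℕ) (hl : l ≠ 0) (hm : m ≠ 0) (hlm : Nat.Coprime l m) :
    ∃ D : ℤ⟦X⟧, Tendsto (fun N => ∏ j ∈ Finset.range N, fac (fun j => ¬ l ∣ j ∧ ¬ m ∣ j) j) atTop (𝓝 D) ∧
      D * (P l * P m) = P 1 * P (l * m) := by
  obtain ⟨u, hu⟩ := P_isUnit l hl
  obtain ⟨v, hv⟩ := P_isUnit m hm
  have hpt : ∀ j, fac (fun j => ¬ l ∣ j ∧ ¬ m ∣ j) j * (fac (fun j => l ∣ j) j * fac (fun j => m ∣ j) j)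
      = fac (fun j => 1 ∣ j) j * fac (fun j => l * m ∣ j) j := by
    intro j
    have : l * m ∣ j ↔ l ∣ j ∧ m ∣ j :=
      ⟨fun h => ⟨dvd_of_mul_right_dvd h, dvd_of_mul_left_dvd h⟩, fun h => hlm.mul_dvd_of_dvd_of_dvd h.1 h.2⟩
    unfold fac
    by_cases h0 : j = 0
    · simp [h0]
    · by_cases h1 : l ∣ j <;> by_cases h2 : m ∣ j <;> simp [h0, h1, h2, this]
  have key : ∀ N, (∏ j ∈ Finset.range N, fac (fun j => ¬ l ∣ j ∧ ¬ m ∣ j) j) *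
      ((∏ j ∈ Finset.range N, fac (fun j => l ∣ j) j) * (∏ j ∈ Finset.range N, fac (fun j => m ∣ j) j)) =
      (∏ j ∈ Finset.range N, fac (fun j => 1 ∣ j) j) * (∏ j ∈ Finset.range N, fac (fun j => l * m ∣ j) j) := by
    intro N
    simp only [← Finset.prod_mul_distrib]
    exact Finset.prod_congr rfl fun j _ => hpt j
  have hD : Multipliable (fac (fun j => ¬ l ∣ j ∧ ¬ m ∣ j)) := by
    have e : fac (fun j => ¬ l ∣ j ∧ ¬ m ∣ j) = fun n => 1 + (if n ≠ 0 ∧ (¬ l ∣ n ∧ ¬ m ∣ n) then - X ^ n else 0) := by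
      funext n; unfold fac; split_ifs <;> ring
    rw [e]
    apply WithPiTopology.multipliable_one_add_of_tendsto_order_atTop_nhds_top
    refine ENat.tendsto_nhds_top_iff_natCast_lt.mpr (fun n ↦ Filter.eventually_atTop.mpr ⟨n+1, ?_⟩)
    intro b hb
    split_ifs
    · rw [order_neg, order_X_pow]; exact_mod_cast hb
    · simp
  refine ⟨∏' j, fac (fun j => ¬ l ∣ j ∧ ¬ m ∣ j) j, hD.hasProd.tendsto_prod_nat, ?_⟩
  refine tendsto_nhds_unique (hD.hasProd.tendsto_prod_nat.mul
    ((hasProd_fac l hl).tendsto_prod_nat.mul (hasProd_fac m hm).tendsto_prod_nat)) ?_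
  refine ((hasProd_fac 1 one_ne_zero).tendsto_prod_nat.mul
    (hasProd_fac (l * m) (mul_ne_zero hl hm)).tendsto_prod_nat).congr fun N => ?_
  exact (key N).symm

/-- Number of multisets supported in `S` of weight `n`. -/
noncomputable def cnt (S : Finset (ℕ × ℕ)) (n : ℕ) : ℕ :=
  Nat.card {M : Multiset (ℕ × ℕ) // (∀ x ∈ M, x ∈ S) ∧ (M.map Prod.fst).sum = n}

theorem card_le_sum (M : Multiset (ℕ × ℕ)) (h : ∀ x ∈ M, 1 ≤ x.1) :
    M.card ≤ (M.map Prod.fst).sum := by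
  induction M using Multiset.induction_on with
  | empty => simp
  | cons a M ih =>
    have h1 := ih (fun x hx => h x (Multiset.mem_cons_of_mem hx))
    have h2 := h a (Multiset.mem_cons_self a M)
    simp only [Multiset.card_cons, Multiset.map_cons, Multiset.sum_cons]
    omega

theorem cnt_finite (S : Finset (ℕ × ℕ)) (hS : ∀ x ∈ S, 1 ≤ x.1) (n : ℕ) :
    Finite {M : Multiset (ℕ × ℕ) // (∀ x ∈ M, x ∈ S) ∧ (M.map Prod.fst).sum = n} := by
  refine Set.Finite.to_subtype (s := {M : Multiset (ℕ × ℕ) | (∀ x ∈ M, x ∈ S) ∧ (M.map Prod.fst).sum = n}) ?_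
  refine (Set.finite_Iic (n • S.val)).subset ?_
  rintro M ⟨h1, h2⟩
  rw [Set.mem_Iic, Multiset.le_iff_count]
  intro a
  by_cases ha : a ∈ M
  · rw [Multiset.count_nsmul, Multiset.count_eq_one_of_mem S.nodup (h1 a ha), mul_one]
    calc _ ≤ M.card := Multiset.count_le_card _ _
      _ ≤ _ := card_le_sum M fun x hx => hS x (h1 x hx)
      _ = n := h2
  · rw [Multiset.count_eq_zero_of_notMem ha]; exact Nat.zero_le _

theorem cnt_insert (S : Finset (ℕ × ℕ)) (s : ℕ × ℕ) (hs : s ∉ S) (hS : ∀ x ∈ insert s S, 1 ≤ x.1) (n : ℕ) :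
    cnt (insert s S) n = cnt S n + if s.1 ≤ n then cnt (insert s S) (n - s.1) else 0 := by
  classical
  have f1 := cnt_finite (insert s S) hS
  have f2 := cnt_finite S (fun x hx => hS x (Finset.mem_insert_of_mem hx))
  unfold cnt
  have e := Nat.card_congr (Equiv.sumCompl (fun M : {M : Multiset (ℕ × ℕ) // (∀ x ∈ M, x ∈ insert s S) ∧ (M.map Prod.fst).sum = n} => s ∉ M.1)).symm
  rw [e, Nat.card_sum]
  congr 1
  · refine Nat.card_congr ⟨fun M => ⟨M.1.1, ?_, M.1.2.2⟩, fun M => ⟨⟨M.1, ?_, M.2.2⟩, ?_⟩, ?_, ?_⟩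
    · intro x hx
      refine (Finset.mem_insert.1 (M.1.2.1 x hx)).resolve_left ?_
      rintro rfl
      exact M.2 hx
    · exact fun x hx => Finset.mem_insert_of_mem (M.2.1 x hx)
    · exact fun h => hs (M.2.1 s h)
    · intro M; rfl
    · intro M; rfl
  · split_ifs with hn
    · refine Nat.card_congr ⟨fun M => ⟨M.1.1.erase s, ?_, ?_⟩, fun M => ⟨⟨s ::ₘ M.1, ?_, ?_⟩, ?_⟩, ?_, ?_⟩
      · exact fun x hx => M.1.2.1 x (Multiset.mem_of_mem_erase hx)
      · have h1 : s ::ₘ M.1.1.erase s = M.1.1 := Multiset.cons_erase (not_not.1 M.2)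
        have h2 := M.1.2.2
        rw [← h1, Multiset.map_cons, Multiset.sum_cons] at h2
        omega
      · intro x hx
        rcases Multiset.mem_cons.1 hx with rfl | hx
        · exact Finset.mem_insert_self _ _
        · exact M.2.1 x hx
      · rw [Multiset.map_cons, Multiset.sum_cons, M.2.2]; omega
      · simp
      · intro M
        apply Subtype.ext
        apply Subtype.ext
        exact Multiset.cons_erase (not_not.1 M.2)
      · intro M
        apply Subtype.ext
        simp
    · rw [Nat.card_eq_zero]
      left
      constructor
      rintro ⟨M, hM⟩
      apply hn
      rw [← M.2.2]
      exact Multiset.single_le_sum (by simp) _ (Multiset.mem_map_of_mem _ (not_not.1 hM))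

theorem cnt_empty : (mk fun n => (cnt ∅ n : ℤ)) = 1 := by
  ext n
  rw [coeff_mk, coeff_one]
  unfold cnt
  split_ifs with h
  · subst h
    norm_cast
    rw [Nat.card_eq_one_iff_unique]
    refine ⟨⟨fun a b => ?_⟩, ⟨⟨0, by simp⟩⟩⟩
    have ha : a.1 = 0 := Multiset.eq_zero_of_forall_notMem fun x hx => by simpa using a.2.1 x hx
    have hb : b.1 = 0 := Multiset.eq_zero_of_forall_notMem fun x hx => by simpa using b.2.1 x hx
    exact Subtype.ext (ha.trans hb.symm)
  · norm_cast
    rw [Nat.card_eq_zero]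
    left
    constructor
    intro a
    have ha : a.1 = 0 := Multiset.eq_zero_of_forall_notMem fun x hx => by simpa using a.2.1 x hx
    have := a.2.2
    rw [ha] at this
    simp at this
    exact h this.symm

theorem cnt_gf (S : Finset (ℕ × ℕ)) (hS : ∀ x ∈ S, 1 ≤ x.1) :
    (mk fun n => (cnt S n : ℤ)) * ∏ x ∈ S, (1 - X ^ x.1) = 1 := by
  induction S using Finset.induction_on with
  | empty => simp [cnt_empty]
  | insert s S hs ih =>
    rw [Finset.prod_insert hs, ← mul_assoc]
    have : (mk fun n => (cnt (insert s S) n : ℤ)) * (1 - X ^ s.1) = (mk fun n => (cnt S n : ℤ)) := by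
      ext n
      rw [mul_sub, mul_one, map_sub, coeff_mul_X_pow', coeff_mk, coeff_mk, coeff_mk, cnt_insert S s hs hS n]
      split_ifs <;> simp
    rw [this]
    exact ih fun x hx => hS x (Finset.mem_insert_of_mem hx)

theorem gf (k l m : ℕ) (hl : l ≠ 0) (hm : m ≠ 0) (hlm : Nat.Coprime l m) :
    (mk fun n => (coloredRegular k l m n : ℤ)) * (P 1 * P (l * m)) ^ k = (P l * P m) ^ k := by
  obtain ⟨D, hD, hDP⟩ := hasProd_D l m hl hm hlm
  set S : ℕ → Finset (ℕ × ℕ) := fun N =>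
    ((Finset.range N).filter (fun j => j ≠ 0 ∧ ¬ l ∣ j ∧ ¬ m ∣ j)) ×ˢ Finset.range k with hSdef
  have hS : ∀ N, ∀ x ∈ S N, 1 ≤ x.1 := by
    intro N x hx
    simp [hSdef] at hx
    omega
  have hprod : ∀ N, ∏ x ∈ S N, (1 - X ^ x.1 : ℤ⟦X⟧) =
      (∏ j ∈ Finset.range N, fac (fun j => ¬ l ∣ j ∧ ¬ m ∣ j) j) ^ k := by
    intro N
    rw [hSdef, Finset.prod_product]
    simp only [Finset.prod_const, Finset.card_range]
    rw [Finset.prod_pow, Finset.prod_filter]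
    rfl
  have hlim : Tendsto (fun N => mk fun n => (cnt (S N) n : ℤ)) atTop
      (𝓝 (mk fun n => (coloredRegular k l m n : ℤ))) := by
    rw [WithPiTopology.tendsto_iff_coeff_tendsto]
    intro d
    refine tendsto_atTop_of_eventually_const (i₀ := d + 1) fun N hN => ?_
    rw [coeff_mk, coeff_mk]
    unfold cnt coloredRegular
    congr 1
    refine Nat.card_congr (Equiv.subtypeEquivRight fun M => ?_)
    constructor
    · rintro ⟨h1, h2⟩
      refine ⟨fun x hx => ?_, h2⟩
      have := h1 x hx
      simp [hSdef] at this
      tauto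
    · rintro ⟨h1, h2⟩
      refine ⟨fun x hx => ?_, h2⟩
      have h3 := h1 x hx
      have h4 : x.1 ≤ d := by
        rw [← h2]
        exact Multiset.single_le_sum (by simp) _ (Multiset.mem_map_of_mem _ hx)
      have h5 : x.1 ≠ 0 := by
        intro h
        rw [h] at h3
        exact h3.1 (dvd_zero _)
      simp [hSdef]
      refine ⟨⟨by omega, h5, h3.1, h3.2.1⟩, h3.2.2⟩
  have h1 : (mk fun n => (coloredRegular k l m n : ℤ)) * D ^ k = 1 := by
    refine tendsto_nhds_unique (hlim.mul (hD.pow k)) ?_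
    refine tendsto_const_nhds.congr fun N => ?_
    rw [← hprod, cnt_gf _ (hS N)]
  rw [← hDP, mul_pow, ← mul_assoc, h1, one_mul]

/-- Generating function of the fibres of a weight function. -/
noncomputable def T {ι : Type} (f : ι → ℕ) : ℤ⟦X⟧ := mk fun n => (Nat.card {i // f i = n} : ℤ)

theorem T_mul {ι κ : Type} (f : ι → ℕ) (g : κ → ℕ) (hf : ∀ n, Finite {i // f i = n})
    (hg : ∀ n, Finite {i // g i = n}) :
    T f * T g = T (fun p : ι × κ => f p.1 + g p.2) := by
  ext n
  unfold T
  rw [coeff_mul, coeff_mk]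
  simp only [coeff_mk]
  have e : {p : ι × κ // f p.1 + g p.2 = n} ≃
      Σ x : {x // x ∈ Finset.HasAntidiagonal.antidiagonal n}, {i // f i = x.1.1} × {j // g j = x.1.2} :=
    { toFun := fun p => ⟨⟨(f p.1.1, g p.1.2), by simpa using p.2⟩, ⟨p.1.1, rfl⟩, ⟨p.1.2, rfl⟩⟩
      invFun := fun q => ⟨(q.2.1.1, q.2.2.1), by
        have := q.1.2
        rw [Finset.HasAntidiagonal.mem_antidiagonal] at this
        rw [q.2.1.2, q.2.2.2, this]⟩
      left_inv := fun p => rfl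
      right_inv := by
        rintro ⟨⟨⟨a, b⟩, h⟩, ⟨i, hi⟩, ⟨j, hj⟩⟩
        simp only at hi hj
        subst hi hj
        rfl }
  rw [Nat.card_congr e, Nat.card_sigma]
  simp only [Nat.card_prod]
  push_cast
  rw [Finset.sum_coe_sort (Finset.HasAntidiagonal.antidiagonal n)
    (fun x : ℕ × ℕ => (Nat.card {i // f i = x.1} : ℤ) * (Nat.card {j // g j = x.2} : ℤ))]

theorem T_sum {ι κ : Type} (f : ι → ℕ) (g : κ → ℕ) (hf : ∀ n, Finite {i // f i = n})
    (hg : ∀ n, Finite {i // g i = n}) : T (Sum.elim f g) = T f + T g := by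
  ext n
  unfold T
  have h1 : Finite {a // Sum.elim f g (Sum.inl a) = n} := hf n
  have h2 : Finite {a // Sum.elim f g (Sum.inr a) = n} := hg n
  rw [map_add, coeff_mk, coeff_mk, coeff_mk, Nat.card_congr (Equiv.subtypeSum), Nat.card_sum]
  simp

theorem T_equiv {ι κ : Type} (e : ι ≃ κ) (f : ι → ℕ) (g : κ → ℕ) (h : ∀ i, f i = g (e i)) :
    T f = T g := by
  ext n
  unfold T
  rw [coeff_mk, coeff_mk]
  congr 1
  exact Nat.card_congr (e.subtypeEquiv fun i => by rw [h])

theorem T_X {ι : Type} (f : ι → ℕ) : T (fun i => f i + 1) = X * T f := by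
  ext n
  unfold T
  cases n with
  | zero => simp
  | succ n => rw [coeff_succ_X_mul, coeff_mk, coeff_mk]; simp

theorem T_expand {ι : Type} (f : ι → ℕ) (k : ℕ) (hk : k ≠ 0) :
    expand k hk (T f) = T (fun i => k * f i) := by
  ext n
  unfold T
  rw [coeff_expand, coeff_mk]
  split_ifs with h
  · obtain ⟨c, rfl⟩ := h
    rw [Nat.mul_div_cancel_left _ (Nat.pos_of_ne_zero hk), coeff_mk]
    congr 1
    refine Nat.card_congr (Equiv.subtypeEquivRight fun i => ?_)
    rw [Nat.mul_right_inj hk]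
  · symm
    rw [coeff_mk]
    norm_cast
    rw [Nat.card_eq_zero]
    left
    constructor
    rintro ⟨i, hi⟩
    exact h ⟨_, hi.symm⟩

theorem fin_of_le {f : ℤ → ℕ} (h : ∀ a, |a| ≤ f a + 1) (n : ℕ) : Finite {i // f i = n} := by
  refine Set.Finite.to_subtype (s := {i | f i = n}) ?_
  refine (Set.finite_Icc (-(n + 1 : ℤ)) (n + 1)).subset ?_
  intro a (ha : f a = n)
  have := h a
  rw [ha, abs_le] at this
  exact this

theorem fin_mul {ι : Type} {f : ι → ℕ} (hf : ∀ n, Finite {i // f i = n}) (k : ℕ) (hk : k ≠ 0) (n : ℕ) :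
    Finite {i // k * f i = n} := by
  have := hf (n / k)
  refine Finite.of_injective (β := {i // f i = n / k}) (fun i => ⟨i.1, ?_⟩) ?_
  · have h := i.2
    exact (Nat.div_eq_of_eq_mul_right (Nat.pos_of_ne_zero hk) h.symm).symm
  · intro a b h
    simpa [Subtype.ext_iff] using h

theorem fin_add {ι : Type} {f : ι → ℕ} (hf : ∀ n, Finite {i // f i = n}) (n : ℕ) :
    Finite {i // f i + 1 = n} := by
  have := hf (n - 1)
  refine Finite.of_injective (β := {i // f i = n - 1}) (fun i => ⟨i.1, ?_⟩) ?_
  · have := i.2; omega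
  · intro a b h
    simpa [Subtype.ext_iff] using h

theorem fin_prod {ι κ : Type} {f : ι → ℕ} {g : κ → ℕ} (hf : ∀ n, Finite {i // f i = n})
    (hg : ∀ n, Finite {i // g i = n}) (n : ℕ) : Finite {p : ι × κ // f p.1 + g p.2 = n} := by
  refine Finite.of_injective (β := Σ x : {x // x ∈ Finset.HasAntidiagonal.antidiagonal n}, {i // f i = x.1.1} × {j // g j = x.1.2})
    (fun p => ⟨⟨(f p.1.1, g p.1.2), by simpa using p.2⟩, ⟨p.1.1, rfl⟩, ⟨p.1.2, rfl⟩⟩) ?_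
  rintro ⟨⟨a, b⟩, h⟩ ⟨⟨c, d⟩, h'⟩ hh
  have h1 := congrArg (fun q => (q.2.1.1, q.2.2.1)) hh
  simpa using h1

def sq (a : ℤ) : ℕ := a.natAbs ^ 2
def tri (a : ℤ) : ℕ := (a * (a + 1) / 2).toNat

theorem sq_cast (a : ℤ) : (sq a : ℤ) = a ^ 2 := by simp [sq]
theorem tri_cast (a : ℤ) : 2 * (tri a : ℤ) = a * (a + 1) := by
  have h0 : 0 ≤ a * (a + 1) := by
    rcases le_or_gt 0 a with h | h
    · positivity
    · nlinarith
  have h1 : 2 ∣ a * (a + 1) := (Int.even_mul_succ_self a).two_dvd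
  unfold tri
  rw [Int.toNat_of_nonneg (Int.ediv_nonneg h0 (by norm_num)), Int.mul_ediv_cancel' h1]

theorem fin_sq (n : ℕ) : Finite {i // sq i = n} := by
  refine fin_of_le (fun a => ?_) n
  rw [sq_cast, abs_le]
  constructor <;> nlinarith [sq_nonneg (a - 1), sq_nonneg (a + 1)]

theorem fin_tri (n : ℕ) : Finite {i // tri i = n} := by
  refine fin_of_le (fun a => ?_) n
  have := tri_cast a
  rw [abs_le]
  rcases le_or_gt 0 a with h | h
  · have := sq_nonneg (a - 1)
    constructor <;> nlinarith
  · constructor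
    · rcases (show a = -1 ∨ a ≤ -2 by omega) with h | h
      · omega
      · nlinarith
    · omega

noncomputable def phi : ℤ⟦X⟧ := T sq
noncomputable def Psi : ℤ⟦X⟧ := T tri
noncomputable def psi : ℤ⟦X⟧ := T (fun n : ℕ => tri n)

theorem fin_psi (n : ℕ) : Finite {i : ℕ // tri i = n} := by
  have := fin_tri n
  refine Finite.of_injective (β := {i // tri i = n}) (fun i => ⟨(i.1 : ℤ), i.2⟩) ?_
  intro a b h
  simpa [Subtype.ext_iff] using h

theorem Psi_eq : Psi = 2 * psi := by
  have : Psi = T (Sum.elim (fun n : ℕ => tri n) (fun n : ℕ => tri n)) := by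
    refine T_equiv Equiv.intEquivNatSumNat _ _ ?_
    rintro (n | n)
    · rfl
    · change tri (Int.negSucc n) = tri n
      zify
      have h1 := tri_cast (Int.negSucc n)
      have h2 := tri_cast n
      rw [Int.negSucc_eq] at h1 ⊢
      linarith
  rw [this, T_sum _ _ fin_psi fin_psi, two_mul]
  rfl

noncomputable def e1 : (ℤ × ℤ) ⊕ (ℤ × ℤ) ≃ ℤ × ℤ :=
  Equiv.ofBijective (Sum.elim (fun p => (p.1 + p.2, p.1 - p.2)) (fun p => (p.1 + p.2 + 1, p.1 - p.2))) (by
    constructor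
    · rintro (⟨a, b⟩ | ⟨a, b⟩) (⟨c, d⟩ | ⟨c, d⟩) h <;> simp at h ⊢ <;> omega
    · rintro ⟨x, y⟩
      rcases Int.even_or_odd' (x + y) with ⟨c, hc | hc⟩
      · refine ⟨Sum.inl (c, x - c), ?_⟩
        simp; omega
      · refine ⟨Sum.inr (c, x - c - 1), ?_⟩
        simp; omega)

noncomputable def e2 : (ℤ × ℤ) ⊕ (ℤ × ℤ) ≃ ℤ × ℤ :=
  Equiv.ofBijective (Sum.elim (fun p => (p.2 + p.1, p.2 - p.1)) (fun p => (-1 - (p.2 + p.1), p.2 - p.1))) (by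
    constructor
    · rintro (⟨a, b⟩ | ⟨a, b⟩) (⟨c, d⟩ | ⟨c, d⟩) h <;> simp at h ⊢ <;> omega
    · rintro ⟨x, y⟩
      rcases Int.even_or_odd' (x + y) with ⟨c, hc | hc⟩
      · refine ⟨Sum.inl (x - c, c), ?_⟩
        simp; omega
      · refine ⟨Sum.inr (-1 - x - (y - c - 1), y - c - 1), ?_⟩
        simp; omega)

theorem phi_sq : phi ^ 2 = (expand 2 two_ne_zero phi) ^ 2 + X * (expand 4 four_ne_zero Psi) ^ 2 := by
  unfold phi Psi
  rw [T_expand, T_expand, pow_two, pow_two, pow_two, T_mul _ _ fin_sq fin_sq,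
    T_mul _ _ (fin_mul fin_sq 2 two_ne_zero) (fin_mul fin_sq 2 two_ne_zero),
    T_mul _ _ (fin_mul fin_tri 4 four_ne_zero) (fin_mul fin_tri 4 four_ne_zero), ← T_X,
    ← T_sum _ _ (fin_prod (fin_mul fin_sq 2 two_ne_zero) (fin_mul fin_sq 2 two_ne_zero))
     (fin_add (fin_prod (fin_mul fin_tri 4 four_ne_zero) (fin_mul fin_tri 4 four_ne_zero)))]
  symm
  refine T_equiv e1 _ _ ?_
  rintro (⟨a, b⟩ | ⟨a, b⟩)
  · change 2 * sq a + 2 * sq b = sq (a + b) + sq (a - b)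
    zify
    simp only [sq_cast]
    ring
  · change 4 * tri a + 4 * tri b + 1 = sq (a + b + 1) + sq (a - b)
    zify
    simp only [sq_cast]
    linear_combination 2 * tri_cast a + 2 * tri_cast b

theorem Psi_sq : Psi ^ 2 = 2 * (phi * expand 2 two_ne_zero Psi) := by
  unfold phi Psi
  rw [T_expand, pow_two, T_mul _ _ fin_tri fin_tri,
    T_mul _ _ fin_sq (fin_mul fin_tri 2 two_ne_zero), two_mul,
    ← T_sum _ _ (fin_prod fin_sq (fin_mul fin_tri 2 two_ne_zero))
     (fin_prod fin_sq (fin_mul fin_tri 2 two_ne_zero))]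
  symm
  refine T_equiv e2 _ _ ?_
  rintro (⟨a, b⟩ | ⟨a, b⟩)
  · change sq a + 2 * tri b = tri (b + a) + tri (b - a)
    zify
    simp only [sq_cast]
    have h1 := tri_cast (b + a)
    have h2 := tri_cast (b - a)
    have h3 := tri_cast b
    linarith
  · change sq a + 2 * tri b = tri (-1 - (b + a)) + tri (b - a)
    zify
    simp only [sq_cast]
    have h1 := tri_cast (-1 - (b + a))
    have h2 := tri_cast (b - a)
    have h3 := tri_cast b
    linarith

theorem psi_sq : psi ^ 2 = phi * expand 2 two_ne_zero psi := by
  have h := Psi_sq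
  rw [Psi_eq, map_mul, map_ofNat] at h
  have h4 : (4 : ℤ⟦X⟧) ≠ 0 := by
    intro h
    have := congrArg constantCoeff h
    rw [map_ofNat] at this
    simp at this
  apply mul_left_cancel₀ h4
  linear_combination h

theorem phi_sq' : phi ^ 2 = (expand 2 two_ne_zero phi) ^ 2 + 4 * X * (expand 4 four_ne_zero psi) ^ 2 := by
  rw [phi_sq, Psi_eq, map_mul, map_ofNat]
  ring

/-- Finite identity of Shanks. -/
theorem shanks {A : Type} [CommRing A] (q : A) (d : ℕ → A) (hd : ∀ i, d i * (1 - q ^ (2 * i + 1)) = 1) (n : ℕ) :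
    ∑ s ∈ Finset.range (2 * n + 1), q ^ (tri s) =
      ∑ s ∈ Finset.range (n + 1), (∏ i ∈ Finset.Ico s n, ((1 - q ^ (2 * i + 2)) * d i)) * q ^ (s * (2 * n + 1)) := by
  induction n with
  | zero => simp [tri]
  | succ n ih =>
    have t1 : tri ((2 * n + 1 : ℕ) : ℤ) = (n + 1) * (2 * n + 1) := by
      zify
      have := tri_cast ((2 * n + 1 : ℕ) : ℤ)
      push_cast at this ⊢
      linarith
    have t2 : tri ((2 * n + 1 + 1 : ℕ) : ℤ) = (n + 1) * (2 * (n + 1) + 1) := by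
      zify
      have := tri_cast ((2 * n + 1 + 1 : ℕ) : ℤ)
      push_cast at this ⊢
      linarith
    rw [show 2 * (n + 1) + 1 = 2 * n + 1 + 1 + 1 by ring, Finset.sum_range_succ, Finset.sum_range_succ, ih,
      Finset.sum_range_succ _ (n + 1), t1, t2]
    simp only [Finset.Ico_self, Finset.prod_empty, one_mul]
    rw [show 2 * (n + 1) + 1 = 2 * n + 1 + 1 + 1 by ring]
    congr 1
    -- telescoping
    have key : ∀ m ≤ n + 1, ∑ s ∈ Finset.range m, ((∏ i ∈ Finset.Ico s (n + 1), ((1 - q ^ (2 * i + 2)) * d i)) * q ^ (s * (2 * n + 1 + 1 + 1))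
        - (∏ i ∈ Finset.Ico s n, ((1 - q ^ (2 * i + 2)) * d i)) * q ^ (s * (2 * n + 1))) =
        if m = 0 then 0 else d n * (∏ i ∈ Finset.Ico (m - 1) n, ((1 - q ^ (2 * i + 2)) * d i)) * q ^ (m * (2 * n + 1)) * (1 - q ^ (2 * m - 1)) := by
      intro m
      induction m with
      | zero => simp
      | succ m ihm =>
        intro hm
        rw [Finset.sum_range_succ, ihm (by omega), Finset.prod_Ico_succ_top (by omega)]
        simp only [Nat.succ_ne_zero, if_false, Nat.add_sub_cancel]
        rw [show 2 * (m + 1) - 1 = 2 * m + 1 by omega]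
        have hdn := hd n
        rcases m with _ | m
        · simp only [if_true]
          linear_combination (∏ i ∈ Finset.Ico 0 n, ((1 - q ^ (2 * i + 2)) * d i)) * hdn
        · simp only [Nat.succ_ne_zero, if_false, Nat.add_sub_cancel]
          have hdm := hd m
          rw [Finset.prod_eq_prod_Ico_succ_bot (show m < n by omega), show 2 * (m + 1) - 1 = 2 * m + 1 by omega]
          generalize (∏ i ∈ Finset.Ico (m + 1) n, ((1 - q ^ (2 * i + 2)) * d i)) = Q
          linear_combination d n * Q * q ^ ((m + 1) * (2 * n + 1)) * (1 - q ^ (2 * m + 2)) * hdm +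
            Q * q ^ ((m + 1) * (2 * n + 1)) * hdn
    have := key (n + 1) le_rfl
    rw [Finset.sum_sub_distrib] at this
    simp only [Nat.succ_ne_zero, if_false, Nat.add_sub_cancel, Finset.Ico_self, Finset.prod_empty] at this
    rw [show 2 * (n + 1) - 1 = 2 * n + 1 by omega] at this
    linear_combination -this - q ^ ((n + 1) * (2 * n + 1)) * hd n

theorem tendsto_psi : Tendsto (fun N => ∑ s ∈ Finset.range N, (X : ℤ⟦X⟧) ^ (tri s)) atTop (𝓝 psi) := by
  rw [WithPiTopology.tendsto_iff_coeff_tendsto]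
  intro d
  refine tendsto_atTop_of_eventually_const (i₀ := d + 1) fun N hN => ?_
  unfold psi T
  rw [coeff_mk, map_sum]
  simp only [coeff_X_pow]
  rw [Finset.sum_boole]
  congr 1
  symm
  apply Nat.subtype_card
  intro s
  simp only [Finset.mem_filter, Finset.mem_range]
  constructor
  · rintro ⟨_, h⟩; exact h.symm
  · intro h
    refine ⟨?_, h.symm⟩
    have h1 := tri_cast s
    rw [h] at h1
    have h2 : s ≤ d := by
      zify
      nlinarith [sq_nonneg ((s : ℤ) - 1)]
    omega

theorem split_prod (N : ℕ) : ∏ n ∈ Finset.range (2 * N), (1 - X ^ (1 * (n + 1)) : ℤ⟦X⟧) =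
    (∏ i ∈ Finset.range N, (1 - X ^ (2 * i + 1))) * ∏ n ∈ Finset.range N, (1 - X ^ (2 * (n + 1))) := by
  induction N with
  | zero => simp
  | succ N ih =>
    rw [show 2 * (N + 1) = 2 * N + 1 + 1 by ring, Finset.prod_range_succ, Finset.prod_range_succ, ih,
      Finset.prod_range_succ, Finset.prod_range_succ]
    ring

theorem tendsto_X_pow_mul (R : ℕ → ℤ⟦X⟧) : Tendsto (fun N => X ^ (2 * N + 1) * R N) atTop (𝓝 0) := by
  rw [WithPiTopology.tendsto_iff_coeff_tendsto]
  intro d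
  refine tendsto_atTop_of_eventually_const (i₀ := d + 1) fun N hN => ?_
  rw [coeff_X_pow_mul', if_neg (by omega), map_zero]

theorem psi_prod : psi * P 1 = P 2 ^ 2 := by
  have hu : ∀ i : ℕ, ∃ d : ℤ⟦X⟧, d * (1 - X ^ (2 * i + 1)) = 1 := by
    intro i
    have : IsUnit (1 - X ^ (2 * i + 1) : ℤ⟦X⟧) := by
      rw [PowerSeries.isUnit_iff_constantCoeff]
      simp
    exact this.exists_left_inv
  choose d hd using hu
  have h1 := (tendsto_psi.comp ((tendsto_add_atTop_nat 1).comp (dbl two_ne_zero))).mul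
    ((tendsto_P 1 one_ne_zero).comp (dbl two_ne_zero))
  have h2 := ((tendsto_P 2 two_ne_zero).pow 2).add (tendsto_X_pow_mul (fun N =>
    (∑ s ∈ Finset.range N, (∏ i ∈ Finset.Ico (s + 1) N, ((1 - X ^ (2 * i + 2)) * d i)) * X ^ (s * (2 * N + 1))) *
      ∏ n ∈ Finset.range (2 * N), (1 - X ^ (1 * (n + 1)) : ℤ⟦X⟧)))
  rw [add_zero] at h2
  refine tendsto_nhds_unique h1 (h2.congr fun N => ?_)
  simp only [Function.comp]
  rw [shanks X d hd N, Finset.sum_range_succ', add_mul]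
  rw [add_comm]
  congr 1
  · rw [← mul_assoc]
    congr 1
    rw [Finset.mul_sum]
    refine Finset.sum_congr rfl fun s _ => ?_
    ring
  · rw [split_prod, zero_mul, pow_zero, mul_one, ← mul_assoc, pow_two]
    congr 1
    rw [Nat.Ico_zero_eq_range, ← Finset.prod_mul_distrib]
    refine Finset.prod_congr rfl fun i _ => ?_
    linear_combination (-(1 - X ^ (2 * i + 2))) * hd i

theorem rescale_expand (k : ℕ) (hk : k ≠ 0) (he : Even k) (f : ℤ⟦X⟧) :
    rescale (-1) (expand k hk f) = expand k hk f := by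
  ext n
  rw [coeff_rescale, coeff_expand]
  split_ifs with h
  · rw [Even.neg_one_pow, one_mul]
    obtain ⟨c, rfl⟩ := h
    exact he.mul_right c
  · simp

theorem P_ne (k : ℕ) (hk : k ≠ 0) : P k ≠ 0 := (P_isUnit k hk).ne_zero

theorem rescale_P (k : ℕ) (hk : k ≠ 0) (he : Even k) : rescale (-1) (P k) = P k := by
  have := expand_P k 1 hk one_ne_zero
  rw [mul_one] at this
  rw [← this, rescale_expand k hk he]

theorem psi2_prod : expand 2 two_ne_zero psi * P 2 = P 4 ^ 2 := by
  have := congrArg (expand 2 two_ne_zero) psi_prod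
  rw [map_mul, map_pow, expand_P _ _ _ one_ne_zero, expand_P _ _ _ two_ne_zero] at this
  exact this

theorem phi_neg : rescale (-1) phi * P 2 = P 1 ^ 2 := by
  have h1 : phi * P 4 ^ 2 * P 1 ^ 2 = P 2 ^ 5 := by
    rw [← psi2_prod]
    have h := psi_prod
    have h' := psi_sq
    linear_combination (psi * P 1 + P 2 ^ 2) * P 2 * h - P 1 ^ 2 * P 2 * h'
  have h2 := congrArg (rescale (-1 : ℤ)) h1
  simp only [map_mul, map_pow] at h2
  rw [rescale_P 4 four_ne_zero (by decide), rescale_P 2 two_ne_zero (by decide)] at h2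
  have h3 := P_neg
  apply mul_left_cancel₀ (pow_ne_zero 5 (P_ne 2 two_ne_zero))
  linear_combination P 1 ^ 2 * h2 - rescale (-1) phi * (P 2 ^ 3 + rescale (-1) (P 1) * P 1 * P 4) * h3

theorem P_eight : P 1 ^ 8 = expand 2 two_ne_zero (P 1 ^ 4 * (phi ^ 4 + 16 * X * (expand 2 two_ne_zero psi) ^ 4))
    - 8 * X * P 4 ^ 8 := by
  have h0 := congrArg (rescale (-1 : ℤ)) phi_sq'
  simp only [map_mul, map_pow, map_add, map_ofNat] at h0
  rw [rescale_expand _ _ (by decide), rescale_expand _ _ (by decide), rescale_neg_one_X] at h0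
  have hB : expand 2 two_ne_zero phi * expand 4 four_ne_zero psi = (expand 2 two_ne_zero psi) ^ 2 := by
    have := congrArg (expand 2 two_ne_zero) psi_sq
    rw [map_mul, map_pow, ← expand_mul] at this
    exact this.symm
  have hE : expand 2 two_ne_zero (expand 2 two_ne_zero psi) = expand 4 four_ne_zero psi := by
    rw [← expand_mul]
  simp only [map_mul, map_pow, map_add, map_ofNat, expand_X, hE]
  rw [expand_P _ _ _ one_ne_zero, mul_one]
  have h1 := phi_neg
  have h2 := psi2_prod
  have h3 : P 1 ^ 8 = (rescale (-1) phi ^ 2) ^ 2 * P 2 ^ 4 := by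
    rw [show P 1 ^ 8 = (P 1 ^ 2) ^ 4 by ring, ← h1]; ring
  have h4 : P 4 ^ 8 = (expand 2 two_ne_zero phi * expand 4 four_ne_zero psi) ^ 2 * P 2 ^ 4 := by
    rw [hB, show P 4 ^ 8 = (P 4 ^ 2) ^ 4 by ring, ← h2]; ring
  rw [h3, h4, h0]
  ring

section modp
variable (p : ℕ) [Fact p.Prime]

theorem frob (hp : p ≠ 0) (f : (ZMod p)⟦X⟧) : expand p hp f = f ^ p := by
  have h := MvPowerSeries.map_frobenius_expand (R := ZMod p) (σ := Unit) p (f := f) hp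
  rw [ZMod.frobenius_zmod, MvPowerSeries.map_id] at h
  exact h

/-- Reduction mod `p`. -/
noncomputable def Q (k : ℕ) : (ZMod p)⟦X⟧ := PowerSeries.map (Int.castRingHom (ZMod p)) (P k)

theorem Q_isUnit (k : ℕ) (hk : k ≠ 0) : IsUnit (Q p k) := (P_isUnit k hk).map _

theorem expand_Q (j k : ℕ) (hj : j ≠ 0) (hk : k ≠ 0) : expand j hj (Q p k) = Q p (j * k) := by
  unfold Q
  rw [← map_expand, expand_P j k hj hk]

theorem Q_frob (k : ℕ) (hk : k ≠ 0) : Q p (p * k) = Q p k ^ p := by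
  rw [← expand_Q p p k (Fact.out : p.Prime).ne_zero hk, frob]

noncomputable def G (k l m : ℕ) : (ZMod p)⟦X⟧ := mk fun n => (coloredRegular k l m n : ZMod p)

theorem gfp (k l m : ℕ) (hl : l ≠ 0) (hm : m ≠ 0) (hlm : Nat.Coprime l m) :
    G p k l m * (Q p 1 * Q p (l * m)) ^ k = (Q p l * Q p m) ^ k := by
  have h := congrArg (PowerSeries.map (Int.castRingHom (ZMod p))) (gf k l m hl hm hlm)
  simp only [map_mul, map_pow] at h
  have e : G p k l m = PowerSeries.map (Int.castRingHom (ZMod p)) (mk fun n => (coloredRegular k l m n : ℤ)) := by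
    ext n
    simp [G]
  rw [e]
  exact h

/-- If the number of colours is `p`, the generating function mod `p` is a series in `X ^ p`. -/
theorem G_p (l m : ℕ) (hl : l ≠ 0) (hm : m ≠ 0) (hlm : Nat.Coprime l m) (n : ℕ) (hn : ¬ p ∣ n) :
    (coloredRegular p l m n : ZMod p) = 0 := by
  have h := gfp p p l m hl hm hlm
  obtain ⟨u, hu⟩ := ((Q_isUnit p 1 one_ne_zero).mul (Q_isUnit p (l * m) (mul_ne_zero hl hm))).exists_right_inv
  have h2 : G p p l m = expand p (Fact.out : p.Prime).ne_zero (Q p l * Q p m * u) := by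
    rw [frob, mul_pow, ← h, mul_assoc, ← mul_pow, hu, one_pow, mul_one]
  have h3 := congrArg (coeff n) h2
  rw [coeff_expand_of_not_dvd _ _ _ hn] at h3
  simpa [G] using h3

end modp

instance : Fact (Nat.Prime 5) := ⟨by norm_num⟩

theorem mod5 (n : ℕ) : (coloredRegular 2 8 5 (4 * n + 1) : ZMod 5) = 2 * coloredRegular 2 2 5 n := by
  have hG := gfp 5 2 8 5 (by norm_num) (by norm_num) (by norm_num)
  have hH := gfp 5 2 2 5 (by norm_num) (by norm_num) (by norm_num)
  have q5 := Q_frob 5 1 one_ne_zero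
  have q10 := Q_frob 5 2 two_ne_zero
  have q40 := Q_frob 5 8 (by norm_num)
  norm_num at q5 q10 q40 hG hH
  rw [q5, q40] at hG
  rw [q5, q10] at hH
  obtain ⟨v1, hv1⟩ := (Q_isUnit 5 1 one_ne_zero).exists_right_inv
  obtain ⟨v2, hv2⟩ := (Q_isUnit 5 2 two_ne_zero).exists_right_inv
  obtain ⟨v4, hv4⟩ := (Q_isUnit 5 4 four_ne_zero).exists_right_inv
  have hG' : G 5 2 8 5 * Q 5 8 ^ 8 = Q 5 1 ^ 8 := by
    have hu : IsUnit (Q 5 1 ^ 2 * Q 5 8 ^ 2) :=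
      ((Q_isUnit 5 1 (by norm_num)).pow 2).mul ((Q_isUnit 5 8 (by norm_num)).pow 2)
    apply hu.mul_left_cancel
    linear_combination hG
  have hH' : G 5 2 2 5 * Q 5 2 ^ 8 = Q 5 1 ^ 8 := by
    have hu : IsUnit (Q 5 1 ^ 2 * Q 5 2 ^ 2) :=
      ((Q_isUnit 5 1 (by norm_num)).pow 2).mul ((Q_isUnit 5 2 (by norm_num)).pow 2)
    apply hu.mul_left_cancel
    linear_combination hH
  have hH4 := congrArg (expand 4 four_ne_zero) hH'
  rw [map_mul, map_pow, map_pow, expand_Q _ _ _ _ two_ne_zero, expand_Q _ _ _ _ one_ne_zero] at hH4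
  norm_num at hH4
  obtain ⟨W0, hW0⟩ : ∃ W, P 1 ^ 8 = expand 2 two_ne_zero W - 8 * X * P 4 ^ 8 := ⟨_, P_eight⟩
  have h8 := congrArg (PowerSeries.map (Int.castRingHom (ZMod 5))) hW0
  simp only [map_pow, map_sub, map_mul, map_expand, map_ofNat, map_X] at h8
  generalize PowerSeries.map (Int.castRingHom (ZMod 5)) W0 = W at h8
  change Q 5 1 ^ 8 = expand 2 two_ne_zero W - 8 * X * Q 5 4 ^ 8 at h8
  have hv8 := congrArg (expand 2 two_ne_zero) hv4
  rw [map_mul, map_one, expand_Q _ _ _ _ four_ne_zero] at hv8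
  norm_num at hv8
  have h5 : (5 : (ZMod 5)⟦X⟧) = 0 := by
    have : (5 : ZMod 5) = 0 := by decide
    rw [← map_ofNat (C (R := ZMod 5)) 5, this, map_zero]
  have main : G 5 2 8 5 = expand 2 two_ne_zero (W * v4 ^ 8) + C 2 * (X * expand 4 four_ne_zero (G 5 2 2 5)) := by
    have hu : IsUnit (Q 5 8 ^ 8) := (Q_isUnit 5 8 (by norm_num)).pow 8
    apply hu.mul_right_cancel
    rw [hG', h8, map_mul, map_pow, ← hH4, map_ofNat]
    have hv : Q 5 8 ^ 8 * expand 2 two_ne_zero v4 ^ 8 = 1 := by rw [← mul_pow, hv8, one_pow]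
    linear_combination (-expand 2 two_ne_zero W) * hv - 2 * X * expand 4 four_ne_zero (G 5 2 2 5) * Q 5 8 ^ 8 * h5
  have hc := congrArg (coeff (4 * n + 1)) main
  rw [map_add, coeff_expand_of_not_dvd _ _ _ (by omega), coeff_C_mul, coeff_succ_X_mul, coeff_expand_mul] at hc
  simpa [G] using hc

theorem mod2 (t : ℕ) (ht : 0 < t) (hodd : Odd t) (n : ℕ) :
    (coloredRegular 3 2 (3 * t) (3 * n + 2) : ZMod 2) = 0 := by
  have h3t : 3 * t ≠ 0 := by omega
  have hcop : Nat.Coprime 2 (3 * t) := by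
    rw [Nat.coprime_two_left]
    exact Odd.mul (by decide) hodd
  have hG := gfp 2 3 2 (3 * t) two_ne_zero h3t hcop
  have q2 := Q_frob 2 1 one_ne_zero
  rw [mul_one] at q2
  rw [Q_frob 2 (3 * t) h3t, q2] at hG
  have hG' : G 2 3 2 (3 * t) * Q 2 (3 * t) ^ 3 = Q 2 1 ^ 3 := by
    have hu : IsUnit (Q 2 1 ^ 3 * Q 2 (3 * t) ^ 3) :=
      ((Q_isUnit 2 1 (by norm_num)).pow 3).mul ((Q_isUnit 2 (3 * t) h3t).pow 3)
    apply hu.mul_left_cancel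
    linear_combination hG
  have hpsi := congrArg (PowerSeries.map (Int.castRingHom (ZMod 2))) psi_prod
  rw [map_mul, map_pow] at hpsi
  change _ * Q 2 1 = Q 2 2 ^ 2 at hpsi
  rw [q2] at hpsi
  have hpsi' : PowerSeries.map (Int.castRingHom (ZMod 2)) psi = Q 2 1 ^ 3 := by
    apply (Q_isUnit 2 1 one_ne_zero).mul_right_cancel
    rw [hpsi]; ring
  obtain ⟨v, hv⟩ := (Q_isUnit 2 t ht.ne').exists_right_inv
  have hv3 := congrArg (expand 3 three_ne_zero) hv
  rw [map_mul, map_one, expand_Q _ _ _ _ ht.ne'] at hv3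
  have main : G 2 3 2 (3 * t) = PowerSeries.map (Int.castRingHom (ZMod 2)) psi * expand 3 three_ne_zero (v ^ 3) := by
    rw [hpsi', ← hG', mul_assoc, map_pow, ← mul_pow, hv3, one_pow, mul_one]
  have hc := congrArg (coeff (3 * n + 2)) main
  rw [coeff_mul, Finset.sum_eq_zero] at hc
  · simpa [G] using hc
  · rintro ⟨a, b⟩ hab
    rw [Finset.HasAntidiagonal.mem_antidiagonal] at hab
    simp only at hab ⊢
    by_cases hb : 3 ∣ b
    · have : coeff a psi = 0 := by
        unfold psi T
        rw [coeff_mk]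
        norm_cast
        rw [Nat.card_eq_zero]
        left
        constructor
        rintro ⟨s, hs⟩
        have h1 := tri_cast s
        rw [show tri (s : ℤ) = a from hs] at h1
        obtain ⟨c, rfl⟩ := hb
        have h2 : 2 * a = s * (s + 1) := by exact_mod_cast h1
        have h4 : a % 3 = 2 := by omega
        have h6 : (s * (s + 1)) % 3 = 1 := by rw [← h2]; omega
        have h5 : s % 3 = 0 ∨ s % 3 = 1 ∨ s % 3 = 2 := by omega
        rw [Nat.mul_mod, Nat.add_mod] at h6
        rcases h5 with h5 | h5 | h5 <;> simp [h5] at h6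
      rw [coeff_map, this, map_zero, zero_mul]
    · rw [coeff_expand_of_not_dvd _ _ _ hb, mul_zero]

end Cb

theorem stmt_19 :
    (∀ n : ℕ, coloredRegular 2 8 5 (4 * n + 1) ≡ 2 * coloredRegular 2 2 5 n [MOD 10]) ∧
    (∀ t : ℕ, 0 < t → Odd t → ∀ n : ℕ,
      coloredRegular 3 2 (3 * t) (3 * n + 2) ≡ 0 [MOD 6]) := by
  constructor
  · intro n
    have h5 := Cb.mod5 n
    have h2 := Cb.G_p 2 8 5 (by norm_num) (by norm_num) (by norm_num) (4 * n + 1) (by omega)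
    have e5 : coloredRegular 2 8 5 (4 * n + 1) ≡ 2 * coloredRegular 2 2 5 n [MOD 5] := by
      rw [← ZMod.natCast_eq_natCast_iff]
      push_cast
      exact h5
    have e2 : coloredRegular 2 8 5 (4 * n + 1) ≡ 2 * coloredRegular 2 2 5 n [MOD 2] := by
      rw [ZMod.natCast_eq_zero_iff] at h2
      unfold Nat.ModEq
      omega
    exact (Nat.modEq_and_modEq_iff_modEq_mul (by norm_num : Nat.Coprime 2 5)).1 ⟨e2, e5⟩
  · intro t ht hodd n
    have h2 := Cb.mod2 t ht hodd n
    have h3 := Cb.G_p 3 2 (3 * t) (by norm_num) (by omega) (by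
      rw [Nat.coprime_two_left]
      exact Odd.mul (by decide) hodd) (3 * n + 2) (by omega)
    rw [ZMod.natCast_eq_zero_iff] at h2 h3
    exact (Nat.modEq_and_modEq_iff_modEq_mul (by norm_num : Nat.Coprime 2 3)).1
      ⟨(Nat.modEq_zero_iff_dvd).2 h2, (Nat.modEq_zero_iff_dvd).2 h3⟩
end
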